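/- A priori regularity of Neumann eigenfunctions on convex domains: let Ω ⊆ ℝ² be a bounded convex open set whose boundary is piecewise smooth, h > 0, and let φ be C^∞ on Ω with φ ∈ L²(Ω), ∇φ ∈ L²(Ω), satisfying −h²Δφ = φ on Ω and the weak Neumann condition: h² ∫_Ω ⟨∇φ, ∇v⟩ dV = ∫_Ω φ v dV for every v ∈ C^∞(ℝ²) that is bounded with bounded gradient. Then (1) all second partial derivatives of φ belong to L²(Ω) (i.e. φ ∈ H²(Ω)), and (2) φ is bounded on Ω: there exists a constant C_h (depending on h) with |φ(x)| ≤ C_h for all x ∈ Ω. -/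

import Mathlib

open MeasureTheory Set

noncomputable section

/-- The open Euclidean ball of radius `r` centered at `p` in `ℝ × ℝ`. -/
def EBall (p : ℝ × ℝ) (r : ℝ) : Set (ℝ × ℝ) :=
  {q : ℝ × ℝ | (q.1 - p.1) ^ 2 + (q.2 - p.2) ^ 2 < r ^ 2}

/-- Partial derivative in the `x` direction. -/
def pdx (φ : ℝ × ℝ → ℝ) (p : ℝ × ℝ) : ℝ := fderiv ℝ φ p (1, 0)

/-- Partial derivative in the `y` direction. -/
def pdy (φ : ℝ × ℝ → ℝ) (p : ℝ × ℝ) : ℝ := fderiv ℝ φ p (0, 1)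

/-- The Laplacian `Δ = ∂²/∂x² + ∂²/∂y²`. -/
def lap (φ : ℝ × ℝ → ℝ) (p : ℝ × ℝ) : ℝ := pdx (pdx φ) p + pdy (pdy φ) p

/-- `|∇φ|²`. -/
def gradSq (φ : ℝ × ℝ → ℝ) (p : ℝ × ℝ) : ℝ := (pdx φ p) ^ 2 + (pdy φ p) ^ 2

/-- A bounded convex open planar domain whose boundary is piecewise smooth:
`∂Ω = ⋃ Γ_j`, each arc `Γ_j` contained in the zero set of a smooth defining function
`f_j` with nonvanishing differential, consecutive arcs meeting at corner points where the
two differentials are linearly independent. -/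
structure PSConvexDomain where
  Ω : Set (ℝ × ℝ)
  isOpen : IsOpen Ω
  convex : Convex ℝ Ω
  bounded : Bornology.IsBounded Ω
  nonempty : Ω.Nonempty
  N : ℕ
  Npos : 0 < N
  Γ : Fin N → Set (ℝ × ℝ)
  f : Fin N → ℝ × ℝ → ℝ
  f_smooth : ∀ j, ContDiff ℝ (⊤ : ℕ∞) (f j)
  boundary_eq : frontier Ω = ⋃ j, Γ j
  Γ_closed : ∀ j, IsClosed (Γ j)
  Γ_sub : ∀ j, Γ j ⊆ {x : ℝ × ℝ | f j x = 0 ∧ fderiv ℝ (f j) x ≠ 0}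
  corner : Fin N → ℝ × ℝ
  corner_eq : ∀ j, Γ j ∩ Γ (j + ⟨1 % N, Nat.mod_lt 1 Npos⟩) = {corner j}
  corner_rank : ∀ j,
    LinearIndependent ℝ
      ![fderiv ℝ (f j) (corner j), fderiv ℝ (f (j + ⟨1 % N, Nat.mod_lt 1 Npos⟩)) (corner j)]

/-- The (finite) set of corner points. -/
def PSConvexDomain.corners (D : PSConvexDomain) : Set (ℝ × ℝ) := Set.range D.corner

/-- A (real-valued) semiclassical Neumann eigenfunction with parameter `h > 0`:
smooth in `Ω` and up to the boundary away from corners, bounded on the closure,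
`L²`-normalized, with finite Dirichlet energy, satisfying `-h²Δφ = φ` pointwise in `Ω`
and the Neumann boundary condition at every non-corner boundary point. -/
structure IsNeumannEF (D : PSConvexDomain) (h : ℝ) (φ : ℝ × ℝ → ℝ) : Prop where
  smooth_int : ContDiffOn ℝ (⊤ : ℕ∞) φ D.Ω
  smooth_bdy : ContDiffOn ℝ (⊤ : ℕ∞) φ (closure D.Ω \ D.corners)
  bounded : ∃ M : ℝ, ∀ p ∈ closure D.Ω, |φ p| ≤ M
  normalized : ∫ p in D.Ω, (φ p) ^ 2 = 1
  grad_int : IntegrableOn (gradSq φ) D.Ω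
  eigen : ∀ p ∈ D.Ω, -(h ^ 2) * lap φ p = φ p
  neumann : ∀ p ∈ frontier D.Ω \ D.corners, ∀ ν : ℝ × ℝ,
      ν.1 ^ 2 + ν.2 ^ 2 = 1 →
      (∀ q ∈ D.Ω, ν.1 * (q.1 - p.1) + ν.2 * (q.2 - p.2) ≤ 0) →
      fderivWithin ℝ φ (closure D.Ω) p ν = 0

open Filter Topology
open scoped ContDiff Convolution

/-!
With `g = (1 + 1 / h²) φ` the eigenvalue problem reads `φ - Δφ = g` with Neumann data zero. Replace
the boundary condition by smooth convex penalties `V` that vanish on the closure of `Ω` and tend to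
infinity off it, and solve `u - Δu + ∇V·∇u = g` on the whole space, approximately in
`L²(exp (-V))`. Since the Hessian of `V` is nonnegative, Bochner's formula bounds the `H²(Ω)` norm
of the test function `u` by the `L²(Ω)` norm of `g`, uniformly in `V`; comparing energies shows that
`u` tends to `φ` in `L²(Ω)`. So `φ` is an `L²(Ω)` limit of test functions bounded in `H²(Ω)`:
duality then puts its second derivatives in `L²(Ω)`, and an averaged Taylor formula bounds `φ`
uniformly in dimension at most two.
-/

/-! ### Directional derivatives -/

section DirectionalDerivative

variable {E : Type*} [NormedAddCommGroup E] [NormedSpace ℝ E]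

/-- The derivative of `f` at `p` in the direction `v`, as a function of `p`; thus
`pdx = dirDeriv (1, 0)` and `pdy = dirDeriv (0, 1)`. -/
def dirDeriv (v : E) (f : E → ℝ) (p : E) : ℝ := fderiv ℝ f p v

variable {v w p : E} {f g : E → ℝ}

lemma dirDeriv_add (hf : DifferentiableAt ℝ f p) (hg : DifferentiableAt ℝ g p) :
    dirDeriv v (fun q => f q + g q) p = dirDeriv v f p + dirDeriv v g p := by
  simp [dirDeriv, fderiv_fun_add hf hg]

lemma dirDeriv_sub (hf : DifferentiableAt ℝ f p) (hg : DifferentiableAt ℝ g p) :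
    dirDeriv v (fun q => f q - g q) p = dirDeriv v f p - dirDeriv v g p := by
  simp [dirDeriv, fderiv_fun_sub hf hg]

lemma dirDeriv_neg : dirDeriv v (fun q => -f q) p = -dirDeriv v f p := by
  simp [dirDeriv, fderiv_fun_neg]

lemma dirDeriv_const_mul (c : ℝ) (hf : DifferentiableAt ℝ f p) :
    dirDeriv v (fun q => c * f q) p = c * dirDeriv v f p := by
  simp [dirDeriv, fderiv_const_mul hf]

lemma dirDeriv_mul (hf : DifferentiableAt ℝ f p) (hg : DifferentiableAt ℝ g p) :
    dirDeriv v (fun q => f q * g q) p = dirDeriv v f p * g p + f p * dirDeriv v g p := by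
  simp [dirDeriv, fderiv_fun_mul hf hg]
  ring

lemma dirDeriv_sum {ι : Type*} {s : Finset ι} {F : ι → E → ℝ}
    (hF : ∀ i ∈ s, DifferentiableAt ℝ (F i) p) :
    dirDeriv v (fun q => ∑ i ∈ s, F i q) p = ∑ i ∈ s, dirDeriv v (F i) p := by
  simp [dirDeriv, fderiv_fun_sum hF]

lemma dirDeriv_exp (hf : DifferentiableAt ℝ f p) :
    dirDeriv v (fun q => Real.exp (f q)) p = Real.exp (f p) * dirDeriv v f p := by
  simp [dirDeriv, fderiv_exp hf]

lemma dirDeriv_comp_add_smul (a : E) (c : ℝ) (hf : DifferentiableAt ℝ f (a + c • p)) :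
    dirDeriv v (fun q => f (a + c • q)) p = c * dirDeriv v f (a + c • p) := by
  have hlin : HasFDerivAt (fun q : E => a + c • q) (c • ContinuousLinearMap.id ℝ E) p :=
    ((hasFDerivAt_id p).const_smul c).const_add a
  have := (hf.hasFDerivAt.comp p hlin).fderiv
  simp only [Function.comp_def] at this
  simp [dirDeriv, this]

lemma dirDeriv_comp_const_sub (x : E) (hf : DifferentiableAt ℝ f (x - p)) :
    dirDeriv v (fun y => f (x - y)) p = -dirDeriv v f (x - p) := by
  simpa [← sub_eq_add_neg] using
    dirDeriv_comp_add_smul (v := v) (p := p) x (-1) (by simpa [← sub_eq_add_neg] using hf)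

lemma dirDeriv_congr (h : f =ᶠ[𝓝 p] g) : dirDeriv v f p = dirDeriv v g p := by
  rw [dirDeriv, dirDeriv, h.fderiv_eq]

lemma dirDeriv_eventuallyEq (h : f =ᶠ[𝓝 p] g) : dirDeriv v f =ᶠ[𝓝 p] dirDeriv v g :=
  h.eventuallyEq_nhds.mono fun _ => dirDeriv_congr

lemma dirDeriv_dirDeriv_eq_fderiv_fderiv (hf : ContDiffAt ℝ ∞ f p) :
    dirDeriv v (dirDeriv w f) p = fderiv ℝ (fderiv ℝ f) p v w := by
  have hd : DifferentiableAt ℝ (fderiv ℝ f) p :=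
    (hf.fderiv_right (m := 1) (WithTop.coe_le_coe.2 le_top)).differentiableAt one_ne_zero
  unfold dirDeriv
  simp [fderiv_clm_apply hd (differentiableAt_const _)]

lemma dirDeriv_comm (hf : ContDiffAt ℝ ∞ f p) :
    dirDeriv v (dirDeriv w f) p = dirDeriv w (dirDeriv v f) p := by
  rw [dirDeriv_dirDeriv_eq_fderiv_fderiv hf, dirDeriv_dirDeriv_eq_fderiv_fderiv hf]
  exact (hf.of_le (WithTop.coe_le_coe.2 le_top)).isSymmSndFDerivAt (n := 2) (by simp) v w

lemma dirDeriv_of_notMem_tsupport (hp : p ∉ tsupport f) : dirDeriv v f p = 0 := by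
  simp [dirDeriv, fderiv_of_notMem_tsupport ℝ hp]

lemma tsupport_dirDeriv_subset : tsupport (dirDeriv v f) ⊆ tsupport f :=
  closure_minimal (fun _ hp => by_contra fun h => hp (dirDeriv_of_notMem_tsupport h))
    (isClosed_tsupport f)

lemma contDiff_dirDeriv (hf : ContDiff ℝ ∞ f) : ContDiff ℝ ∞ (dirDeriv v f) :=
  (hf.fderiv_right (m := ∞) (by simp)).clm_apply contDiff_const

lemma differentiable_dirDeriv (hf : ContDiff ℝ ∞ f) : Differentiable ℝ (dirDeriv v f) :=
  (contDiff_dirDeriv hf).differentiable (by simp)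

lemma contDiffOn_dirDeriv {s : Set E} (hs : IsOpen s) (hf : ContDiffOn ℝ ∞ f s) :
    ContDiffOn ℝ ∞ (dirDeriv v f) s :=
  (hf.fderiv_of_isOpen hs (by simp)).clm_apply contDiffOn_const

lemma hasDerivAt_comp_add_smul (x : E) (t : ℝ) (hf : DifferentiableAt ℝ f (x + t • v)) :
    HasDerivAt (fun t : ℝ => f (x + t • v)) (dirDeriv v f (x + t • v)) t := by
  have hline : HasDerivAt (fun t : ℝ => x + t • v) v t := by
    simpa using ((hasDerivAt_id t).smul_const v).const_add x
  exact hf.hasFDerivAt.comp_hasDerivAt t hline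

lemma dirDeriv_sum_smul {ι : Type*} (s : Finset ι) (c : ι → ℝ) (e : ι → E) :
    dirDeriv (∑ i ∈ s, c i • e i) f p = ∑ i ∈ s, c i * dirDeriv (e i) f p := by
  simp [dirDeriv]

lemma dirDeriv_dirDeriv_sum_smul {ι : Type*} (s : Finset ι) (c : ι → ℝ) (e : ι → E)
    (hf : ContDiff ℝ ∞ f) :
    dirDeriv (∑ i ∈ s, c i • e i) (dirDeriv (∑ i ∈ s, c i • e i) f) p =
      ∑ i ∈ s, ∑ j ∈ s, c i * c j * dirDeriv (e i) (dirDeriv (e j) f) p := by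
  have hdiff : ∀ j, DifferentiableAt ℝ (dirDeriv (e j) f) p := fun j =>
    (contDiff_dirDeriv hf).differentiable (by simp) p
  have hfun : dirDeriv (∑ i ∈ s, c i • e i) f = fun q => ∑ j ∈ s, c j * dirDeriv (e j) f q :=
    funext fun q => dirDeriv_sum_smul s c e
  rw [hfun, dirDeriv_sum_smul]
  refine Finset.sum_congr rfl fun i _ => ?_
  rw [dirDeriv_sum fun j _ => (hdiff j).const_mul _, Finset.mul_sum]
  refine Finset.sum_congr rfl fun j _ => ?_
  rw [dirDeriv_const_mul _ (hdiff j)]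
  ring

end DirectionalDerivative

/-! ### Test functions -/

section TestFunction

variable {E : Type*} [NormedAddCommGroup E] [NormedSpace ℝ E]

/-- A test function: a smooth real function with compact support. -/
structure IsTestFunction (u : E → ℝ) : Prop where
  contDiff : ContDiff ℝ ∞ u
  hasCompactSupport : HasCompactSupport u

namespace IsTestFunction

variable {u w f : E → ℝ}

lemma continuous (hu : IsTestFunction u) : Continuous u := hu.contDiff.continuous

lemma differentiable (hu : IsTestFunction u) : Differentiable ℝ u :=
  hu.contDiff.differentiable (by simp)

lemma add (hu : IsTestFunction u) (hw : IsTestFunction w) :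
    IsTestFunction (fun p => u p + w p) :=
  ⟨hu.contDiff.add hw.contDiff, hu.hasCompactSupport.add hw.hasCompactSupport⟩

lemma mul_left (hu : IsTestFunction u) (hf : ContDiff ℝ ∞ f) :
    IsTestFunction (fun p => f p * u p) :=
  ⟨hf.mul hu.contDiff, hu.hasCompactSupport.mul_left⟩

lemma mul_right (hu : IsTestFunction u) (hf : ContDiff ℝ ∞ f) :
    IsTestFunction (fun p => u p * f p) :=
  ⟨hu.contDiff.mul hf, hu.hasCompactSupport.mul_right⟩

lemma const_mul (hu : IsTestFunction u) (c : ℝ) : IsTestFunction (fun p => c * u p) :=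
  hu.mul_left contDiff_const

lemma sub (hu : IsTestFunction u) (hw : IsTestFunction w) :
    IsTestFunction (fun p => u p - w p) := by
  simpa only [sub_eq_add_neg, neg_one_mul] using hu.add (hw.const_mul (-1))

lemma sq (hu : IsTestFunction u) : IsTestFunction (fun p => u p ^ 2) := by
  simpa only [pow_two] using hu.mul_left hu.contDiff

lemma sum {ι : Type*} {s : Finset ι} {F : ι → E → ℝ} (hF : ∀ i ∈ s, IsTestFunction (F i)) :
    IsTestFunction (fun p => ∑ i ∈ s, F i p) := by
  classical
  induction s using Finset.induction_on with
  | empty => exact ⟨by simpa using contDiff_const, by simpa using! HasCompactSupport.zero⟩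
  | insert i s hi ih =>
    simp only [Finset.sum_insert hi]
    exact (hF i (s.mem_insert_self i)).add (ih fun j hj => hF j (Finset.mem_insert_of_mem hj))

lemma dirDeriv (hu : IsTestFunction u) (v : E) : IsTestFunction (dirDeriv v u) :=
  ⟨contDiff_dirDeriv hu.contDiff, hu.hasCompactSupport.of_isClosed_subset (isClosed_tsupport _)
    tsupport_dirDeriv_subset⟩

lemma comp_add_smul (hu : IsTestFunction u) (a : E) {c : ℝ} (hc : c ≠ 0) :
    IsTestFunction (fun p => u (a + c • p)) where
  contDiff := hu.contDiff.comp (contDiff_const.add (contDiff_const_smul c))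
  hasCompactSupport := hu.hasCompactSupport.comp_homeomorph
    ((Homeomorph.smulOfNeZero c hc).trans (Homeomorph.addLeft a))

lemma comp_const_sub (hu : IsTestFunction u) (x : E) : IsTestFunction (fun y => u (x - y)) where
  contDiff := hu.contDiff.comp (contDiff_const.sub contDiff_id)
  hasCompactSupport := hu.hasCompactSupport.comp_homeomorph (Homeomorph.subLeft x)

variable [MeasurableSpace E] [BorelSpace E] {μ : Measure E} [IsFiniteMeasureOnCompacts μ]

lemma integrable (hu : IsTestFunction u) : Integrable u μ :=
  hu.continuous.integrable_of_hasCompactSupport hu.hasCompactSupport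

lemma memLp_two (hu : IsTestFunction u) : MemLp u 2 μ :=
  hu.continuous.memLp_of_hasCompactSupport hu.hasCompactSupport

end IsTestFunction

end TestFunction

/-! ### Energy densities and second-order operators -/

section Operators

variable {E : Type*} [NormedAddCommGroup E] [NormedSpace ℝ E] {ι : Type*} [Fintype ι]
  (e : ι → E)

/-- The inner product of the gradients of `u` and `v`, the directions `e` serving as an
orthonormal frame. -/
def gradInner (u v : E → ℝ) (p : E) : ℝ := ∑ i, dirDeriv (e i) u p * dirDeriv (e i) v p

/-- The Laplacian with respect to the frame `e`. -/
def frameLaplacian (u : E → ℝ) (p : E) : ℝ := ∑ i, dirDeriv (e i) (dirDeriv (e i) u) p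

/-- The squared Hilbert–Schmidt norm of the Hessian in the frame `e`. -/
def hessSq (u : E → ℝ) (p : E) : ℝ := ∑ i, ∑ j, dirDeriv (e i) (dirDeriv (e j) u) p ^ 2

/-- The density of the `H¹` inner product. -/
def h1Inner (u v : E → ℝ) (p : E) : ℝ := gradInner e u v p + u p * v p

/-- The density of the squared `H²` norm. -/
def h2Sq (u : E → ℝ) (p : E) : ℝ := hessSq e u p + gradInner e u u p + u p ^ 2

/-- The drift operator `u - Δu + ∇V·∇u`, symmetric for the measure with density `exp (-V)`. -/
def driftOp (V u : E → ℝ) (p : E) : ℝ := u p - frameLaplacian e u p + gradInner e V u p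

/-- The Schrödinger operator `-Δ + Q`. -/
def schrodingerOp (Q u : E → ℝ) (p : E) : ℝ := Q p * u p - frameLaplacian e u p

/-- The potential `|∇V|² / 4 - ΔV / 2 + 1` for which `-Δ + Q` is conjugate to the drift operator
of `V` by multiplication with `exp (-V / 2)`. -/
def driftPotential (V : E → ℝ) (p : E) : ℝ :=
  gradInner e V V p / 4 - frameLaplacian e V p / 2 + 1

variable {e} {u v V Q : E → ℝ} {p : E}

lemma gradInner_comm : gradInner e u v p = gradInner e v u p := by
  simp only [gradInner, mul_comm]

lemma gradInner_self_nonneg : 0 ≤ gradInner e u u p :=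
  Finset.sum_nonneg fun _ _ => mul_self_nonneg _

lemma sq_le_h1Inner_self : u p ^ 2 ≤ h1Inner e u u p :=
  (pow_two _).trans_le (le_add_of_nonneg_left gradInner_self_nonneg)

lemma hessSq_nonneg : 0 ≤ hessSq e u p :=
  Finset.sum_nonneg fun _ _ => Finset.sum_nonneg fun _ _ => sq_nonneg _

lemma h2Sq_nonneg : 0 ≤ h2Sq e u p :=
  add_nonneg (add_nonneg hessSq_nonneg gradInner_self_nonneg) (sq_nonneg _)

lemma hessSq_le_h2Sq : hessSq e u p ≤ h2Sq e u p := by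
  rw [h2Sq, add_assoc]
  exact le_add_of_nonneg_right (add_nonneg gradInner_self_nonneg (sq_nonneg _))

lemma sq_dirDeriv_dirDeriv_le_h2Sq (i j : ι) {p : E} :
    dirDeriv (e i) (dirDeriv (e j) u) p ^ 2 ≤ h2Sq e u p := by
  have hrow := Finset.single_le_sum (f := fun k => ∑ l, dirDeriv (e k) (dirDeriv (e l) u) p ^ 2)
    (fun k _ => Finset.sum_nonneg fun l _ => sq_nonneg _) (Finset.mem_univ i)
  have hentry := Finset.single_le_sum (f := fun l => dirDeriv (e i) (dirDeriv (e l) u) p ^ 2)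
    (fun l _ => sq_nonneg _) (Finset.mem_univ j)
  exact (hentry.trans hrow).trans hessSq_le_h2Sq

lemma contDiff_gradInner (hu : ContDiff ℝ ∞ u) (hv : ContDiff ℝ ∞ v) :
    ContDiff ℝ ∞ (gradInner e u v) :=
  ContDiff.sum fun _ _ => (contDiff_dirDeriv hu).mul (contDiff_dirDeriv hv)

lemma contDiff_frameLaplacian (hu : ContDiff ℝ ∞ u) : ContDiff ℝ ∞ (frameLaplacian e u) :=
  ContDiff.sum fun _ _ => contDiff_dirDeriv (contDiff_dirDeriv hu)

lemma contDiff_driftOp (hV : ContDiff ℝ ∞ V) (hu : ContDiff ℝ ∞ u) :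
    ContDiff ℝ ∞ (driftOp e V u) :=
  (hu.sub (contDiff_frameLaplacian hu)).add (contDiff_gradInner hV hu)

lemma contDiff_driftPotential (hV : ContDiff ℝ ∞ V) : ContDiff ℝ ∞ (driftPotential e V) :=
  (((contDiff_gradInner hV hV).div_const 4).sub ((contDiff_frameLaplacian hV).div_const 2)).add
    contDiff_const

namespace IsTestFunction

lemma gradInner_right (hv : IsTestFunction v) (hu : ContDiff ℝ ∞ u) :
    IsTestFunction (gradInner e u v) :=
  .sum fun i _ => (hv.dirDeriv (e i)).mul_left (contDiff_dirDeriv hu)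

lemma h1Inner_right (hv : IsTestFunction v) (hu : ContDiff ℝ ∞ u) :
    IsTestFunction (h1Inner e u v) :=
  (hv.gradInner_right hu).add (hv.mul_left hu)

lemma frameLaplacian (hu : IsTestFunction u) : IsTestFunction (frameLaplacian e u) :=
  .sum fun i _ => (hu.dirDeriv (e i)).dirDeriv (e i)

lemma h2Sq (hu : IsTestFunction u) : IsTestFunction (h2Sq e u) :=
  ((IsTestFunction.sum fun i _ => .sum fun j _ => ((hu.dirDeriv (e j)).dirDeriv (e i)).sq).add
    (hu.gradInner_right hu.contDiff)).add hu.sq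

lemma driftOp (hu : IsTestFunction u) (hV : ContDiff ℝ ∞ V) : IsTestFunction (driftOp e V u) :=
  (hu.sub hu.frameLaplacian).add (hu.gradInner_right hV)

lemma schrodingerOp_driftPotential (hu : IsTestFunction u) (hV : ContDiff ℝ ∞ V) :
    IsTestFunction (schrodingerOp e (driftPotential e V) u) :=
  (hu.mul_left (contDiff_driftPotential hV)).sub hu.frameLaplacian

end IsTestFunction

end Operators

/-! ### The weighted Green and Bochner formulas -/

section Convexity

variable {E : Type*} [NormedAddCommGroup E] [NormedSpace ℝ E] {V : E → ℝ}

lemma dirDeriv_dirDeriv_nonneg_of_convexOn (hV : ContDiff ℝ ∞ V) (hconv : ConvexOn ℝ univ V)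
    (v p : E) : 0 ≤ dirDeriv v (dirDeriv v V) p := by
  have hconv_line : ConvexOn ℝ univ (fun t : ℝ => V (p + t • v)) := by
    have := hconv.comp_affineMap (AffineMap.lineMap p (p + v))
    simpa [Function.comp_def, AffineMap.lineMap_apply, add_comm] using this
  have hderiv : deriv (fun t : ℝ => V (p + t • v)) = fun t => dirDeriv v V (p + t • v) :=
    funext fun t => (hasDerivAt_comp_add_smul p t (hV.differentiable (by simp) _)).deriv
  have hmono : Monotone fun t : ℝ => dirDeriv v V (p + t • v) := by
    rw [← hderiv, ← monotoneOn_univ]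
    exact hconv_line.monotoneOn_deriv fun t _ =>
      (hasDerivAt_comp_add_smul p t (hV.differentiable (by simp) _)).differentiableAt
  have hsecond := (hasDerivAt_comp_add_smul (f := dirDeriv v V) (v := v) p 0
    (differentiable_dirDeriv hV _)).deriv
  simpa [hsecond] using hmono.deriv_nonneg (x := 0)

lemma sum_mul_dirDeriv_dirDeriv_nonneg_of_convexOn {ι : Type*} [Fintype ι] (e : ι → E)
    (hV : ContDiff ℝ ∞ V) (hconv : ConvexOn ℝ univ V) (a : ι → ℝ) (p : E) :
    0 ≤ ∑ i, ∑ j, a i * a j * dirDeriv (e i) (dirDeriv (e j) V) p := by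
  rw [← dirDeriv_dirDeriv_sum_smul _ _ _ hV]
  exact dirDeriv_dirDeriv_nonneg_of_convexOn hV hconv _ p

end Convexity

section Pointwise

variable {E : Type*} [NormedAddCommGroup E] [NormedSpace ℝ E] {ι : Type*} [Fintype ι]
  {e : ι → E} {V u v w χ q Q : E → ℝ} {p : E}

lemma dirDeriv_driftOp (hV : ContDiff ℝ ∞ V) (hu : ContDiff ℝ ∞ u) (d : E) :
    dirDeriv d (driftOp e V u) p = driftOp e V (dirDeriv d u) p +
      ∑ i, dirDeriv d (dirDeriv (e i) V) p * dirDeriv (e i) u p := by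
  have hlap : dirDeriv d (frameLaplacian e u) p = frameLaplacian e (dirDeriv d u) p := by
    have hcomm (i : ι) : dirDeriv d (dirDeriv (e i) u) = dirDeriv (e i) (dirDeriv d u) :=
      funext fun q => dirDeriv_comm hu.contDiffAt
    simp only [frameLaplacian, ← hcomm]
    rw [← Finset.sum_congr rfl fun i _ => dirDeriv_comm (contDiff_dirDeriv hu).contDiffAt]
    exact dirDeriv_sum fun i _ => differentiable_dirDeriv (contDiff_dirDeriv hu) p
  have hgrad : dirDeriv d (gradInner e V u) p = gradInner e V (dirDeriv d u) p +
      ∑ i, dirDeriv d (dirDeriv (e i) V) p * dirDeriv (e i) u p := by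
    rw [gradInner, ← Finset.sum_add_distrib]
    refine (dirDeriv_sum fun i _ =>
      (differentiable_dirDeriv hV p).fun_mul (differentiable_dirDeriv hu p)).trans ?_
    refine Finset.sum_congr rfl fun i _ => ?_
    rw [dirDeriv_mul (differentiable_dirDeriv hV p) (differentiable_dirDeriv hu p),
      dirDeriv_comm hu.contDiffAt]
    ring
  have hlap_diff : DifferentiableAt ℝ (frameLaplacian e u) p :=
    (contDiff_frameLaplacian hu).differentiable (by simp) p
  have hu_diff : DifferentiableAt ℝ u p := hu.differentiable (by simp) p
  have hsum := dirDeriv_add (v := d) (hu_diff.sub hlap_diff)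
    ((contDiff_gradInner (e := e) hV hu).differentiable (by simp) p)
  rw [show dirDeriv d (driftOp e V u) p = _ from hsum,
    show dirDeriv d (u - frameLaplacian e u) p = _ from dirDeriv_sub hu_diff hlap_diff, hlap, hgrad]
  unfold driftOp
  ring

lemma frameLaplacian_mul (hu : ContDiff ℝ ∞ u) (hv : ContDiff ℝ ∞ v) :
    frameLaplacian e (fun q => u q * v q) p =
      frameLaplacian e u p * v p + 2 * gradInner e u v p + u p * frameLaplacian e v p := by
  simp only [frameLaplacian, gradInner, Finset.sum_mul, Finset.mul_sum, ← Finset.sum_add_distrib]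
  refine Finset.sum_congr rfl fun i _ => ?_
  have hu_diff := hu.differentiable (by simp)
  have hv_diff := hv.differentiable (by simp)
  have hu' := differentiable_dirDeriv (v := e i) hu
  have hv' := differentiable_dirDeriv (v := e i) hv
  have hfirst : dirDeriv (e i) (fun q => u q * v q) =
      fun q => dirDeriv (e i) u q * v q + u q * dirDeriv (e i) v q :=
    funext fun q => dirDeriv_mul (hu_diff q) (hv_diff q)
  rw [hfirst, dirDeriv_add ((hu' p).fun_mul (hv_diff p)) ((hu_diff p).fun_mul (hv' p)),
    dirDeriv_mul (hu' p) (hv_diff p), dirDeriv_mul (hu_diff p) (hv' p)]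
  ring

lemma gradInner_mul_right (hu : DifferentiableAt ℝ u p) (hv : DifferentiableAt ℝ v p) :
    gradInner e w (fun q => u q * v q) p =
      gradInner e w u p * v p + u p * gradInner e w v p := by
  simp only [gradInner, Finset.sum_mul, Finset.mul_sum, ← Finset.sum_add_distrib]
  refine Finset.sum_congr rfl fun i _ => ?_
  rw [dirDeriv_mul hu hv]
  ring

lemma gradInner_exp_right (hv : DifferentiableAt ℝ v p) :
    gradInner e w (fun q => Real.exp (v q)) p = Real.exp (v p) * gradInner e w v p := by
  simp only [gradInner, Finset.mul_sum]
  refine Finset.sum_congr rfl fun i _ => ?_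
  rw [dirDeriv_exp hv]
  ring

lemma frameLaplacian_exp (hv : ContDiff ℝ ∞ v) :
    frameLaplacian e (fun q => Real.exp (v q)) p =
      Real.exp (v p) * (gradInner e v v p + frameLaplacian e v p) := by
  simp only [frameLaplacian, gradInner, Finset.mul_sum, ← Finset.sum_add_distrib]
  refine Finset.sum_congr rfl fun i _ => ?_
  have hv_diff := hv.differentiable (by simp)
  have hfirst : dirDeriv (e i) (fun q => Real.exp (v q)) =
      fun q => Real.exp (v q) * dirDeriv (e i) v q :=
    funext fun q => dirDeriv_exp (hv_diff q)
  rw [hfirst,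
    dirDeriv_mul (hv_diff p).exp (differentiable_dirDeriv hv p), dirDeriv_exp (hv_diff p)]
  ring

lemma sum_dirDeriv_mul (hu : DifferentiableAt ℝ u p) (hv : ContDiff ℝ ∞ v) :
    ∑ i, dirDeriv (e i) (fun q => u q * dirDeriv (e i) v q) p =
      gradInner e u v p + u p * frameLaplacian e v p := by
  simp only [frameLaplacian, gradInner, Finset.mul_sum, ← Finset.sum_add_distrib]
  exact Finset.sum_congr rfl fun i _ => dirDeriv_mul hu (differentiable_dirDeriv hv p)

lemma sum_h1Inner_dirDeriv_self :
    ∑ i, h1Inner e (dirDeriv (e i) u) (dirDeriv (e i) u) p =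
      hessSq e u p + gradInner e u u p := by
  simp only [h1Inner, hessSq, gradInner, Finset.sum_add_distrib, pow_two]
  rw [Finset.sum_comm]

-- The commutator of `∂ⱼ` with the drift operator is the Hessian of `V`, which is nonnegative.
lemma sum_mul_driftOp_dirDeriv_le_gradInner_driftOp (hV : ContDiff ℝ ∞ V)
    (hconv : ConvexOn ℝ univ V) (hu : ContDiff ℝ ∞ u) (p : E) :
    ∑ i, dirDeriv (e i) u p * driftOp e V (dirDeriv (e i) u) p ≤
      gradInner e u (driftOp e V u) p := by
  have hhess := sum_mul_dirDeriv_dirDeriv_nonneg_of_convexOn e hV hconv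
    (fun i => dirDeriv (e i) u p) p
  simp only [mul_assoc, ← Finset.mul_sum] at hhess
  simp only [gradInner, dirDeriv_driftOp hV hu, mul_add, Finset.sum_add_distrib]
  simp only [mul_comm (dirDeriv (e _) (dirDeriv (e _) V) p)]
  linarith

lemma exp_mul_driftOp_mul_exp (hV : ContDiff ℝ ∞ V) (hu : ContDiff ℝ ∞ u) :
    Real.exp (-V p / 2) * driftOp e V (fun q => u q * Real.exp (V q / 2)) p =
      schrodingerOp e (driftPotential e V) u p := by
  have hV2 : ContDiff ℝ ∞ fun q => 2⁻¹ * V q := contDiff_const.mul hV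
  have hdiff : Differentiable ℝ V := hV.differentiable (by simp)
  have hderiv (i : ι) : dirDeriv (e i) (fun q => 2⁻¹ * V q) = fun q => 2⁻¹ * dirDeriv (e i) V q :=
    funext fun q => dirDeriv_const_mul _ (hdiff q)
  have hgrad (f : E → ℝ) : gradInner e f (fun q => 2⁻¹ * V q) p = 2⁻¹ * gradInner e f V p := by
    simp only [gradInner, hderiv, Finset.mul_sum, mul_left_comm]
  have hlap : frameLaplacian e (fun q => 2⁻¹ * V q) p = 2⁻¹ * frameLaplacian e V p := by
    simp only [frameLaplacian, hderiv, Finset.mul_sum,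
      dirDeriv_const_mul _ (differentiable_dirDeriv hV p)]
  have hexp : Real.exp (-V p / 2) * Real.exp (2⁻¹ * V p) = 1 := by
    rw [← Real.exp_add, show -V p / 2 + 2⁻¹ * V p = 0 by ring, Real.exp_zero]
  simp only [div_eq_inv_mul (V _)]
  rw [driftOp, frameLaplacian_mul hu hV2.exp,
    gradInner_mul_right (hu.differentiable (by simp) p) (hV2.exp.differentiable (by simp) p),
    gradInner_exp_right (hV2.differentiable (by simp) p),
    gradInner_exp_right (hV2.differentiable (by simp) p), frameLaplacian_exp hV2, hlap,
    gradInner_comm (u := fun q => 2⁻¹ * V q), hgrad, hgrad, hgrad,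
    gradInner_comm (u := fun q => 2⁻¹ * V q), hgrad, schrodingerOp, driftPotential,
    gradInner_comm (u := u)]
  linear_combination (u p - frameLaplacian e u p + u p * (gradInner e V V p / 4 -
    frameLaplacian e V p / 2)) * hexp

end Pointwise

section Integral

variable {E : Type*} [NormedAddCommGroup E] [NormedSpace ℝ E] [FiniteDimensional ℝ E]
  [MeasurableSpace E] [BorelSpace E] {μ : Measure E} [μ.IsAddHaarMeasure]
  {ι : Type*} [Fintype ι] {e : ι → E} {V u v w χ q Q : E → ℝ}

lemma integral_dirDeriv_eq_zero (hu : IsTestFunction u) (d : E) :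
    ∫ p, dirDeriv d u p ∂μ = 0 := by
  simpa [dirDeriv] using integral_mul_fderiv_eq_neg_fderiv_mul_of_integrable
    (μ := μ) (f := fun _ => (1 : ℝ)) (g := u) (v := d) (by simp)
    (by simpa [dirDeriv] using! (hu.dirDeriv d).integrable)
    (by simpa using hu.integrable) (fun _ _ => differentiableAt_const _)
    (fun x _ => hu.differentiable x)

lemma integral_sum_dirDeriv_eq_zero {X : ι → E → ℝ} (hX : ∀ i, IsTestFunction (X i)) :
    ∫ p, ∑ i, dirDeriv (e i) (X i) p ∂μ = 0 := by
  rw [integral_finsetSum _ fun i _ => ((hX i).dirDeriv (e i)).integrable]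
  exact Finset.sum_eq_zero fun i _ => integral_dirDeriv_eq_zero (hX i) (e i)

lemma integral_mul_dirDeriv (hu : IsTestFunction u) (hv : ContDiff ℝ ∞ v) (d : E) :
    ∫ p, u p * dirDeriv d v p ∂μ = -∫ p, dirDeriv d u p * v p ∂μ := by
  have h := integral_dirDeriv_eq_zero (μ := μ) (hu.mul_right hv) d
  simp only [dirDeriv_mul (hu.differentiable _) (hv.differentiable (by simp) _)] at h
  rw [integral_add ((hu.dirDeriv d).mul_right hv).integrable
    (hu.mul_right (contDiff_dirDeriv hv)).integrable] at h
  linarith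

lemma integral_mul_driftOp_mul_exp (hV : ContDiff ℝ ∞ V) (hu : ContDiff ℝ ∞ u)
    (hv : IsTestFunction v) :
    ∫ p, v p * driftOp e V u p * Real.exp (-V p) ∂μ =
      ∫ p, h1Inner e u v p * Real.exp (-V p) ∂μ := by
  have hweight : ContDiff ℝ ∞ fun p => Real.exp (-V p) := hV.neg.exp
  have hvw : IsTestFunction fun p => v p * Real.exp (-V p) := hv.mul_right hweight
  have hdiv := integral_sum_dirDeriv_eq_zero (μ := μ) (e := e)
    fun i => hvw.mul_right (contDiff_dirDeriv (v := e i) hu)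
  rw [← sub_eq_zero, ← neg_eq_zero, ← hdiv, ← integral_sub
    ((hv.mul_right (contDiff_driftOp hV hu)).mul_right hweight).integrable
    ((hv.h1Inner_right hu).mul_right hweight).integrable, ← integral_neg]
  refine integral_congr_ae (.of_forall fun p => ?_)
  have hgradV : gradInner e u (fun q => -V q) p = -gradInner e u V p := by
    simp [gradInner, dirDeriv_neg]
  have hV_diff : DifferentiableAt ℝ (fun q => -V q) p := hV.neg.differentiable (by simp) p
  simp only [sum_dirDeriv_mul (hvw.differentiable p) hu]
  rw [gradInner_comm, gradInner_mul_right (hv.differentiable p) hV_diff.exp,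
    gradInner_exp_right hV_diff, hgradV, driftOp, h1Inner, gradInner_comm (u := V)]
  ring

-- Bochner's inequality: apply Green's formula to `u` and to each `∂ⱼu`.
lemma integral_h2Sq_mul_exp_le (hV : ContDiff ℝ ∞ V) (hconv : ConvexOn ℝ univ V)
    (hu : IsTestFunction u) :
    ∫ p, h2Sq e u p * Real.exp (-V p) ∂μ ≤ ∫ p, driftOp e V u p ^ 2 * Real.exp (-V p) ∂μ := by
  have hweight : ContDiff ℝ ∞ fun p => Real.exp (-V p) := hV.neg.exp
  have hu' (i : ι) : IsTestFunction (dirDeriv (e i) u) := hu.dirDeriv (e i)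
  have hLu : IsTestFunction (driftOp e V u) := hu.driftOp hV
  have hterm (i : ι) :=
    ((hu' i).mul_right (contDiff_driftOp (e := e) hV (hu' i).contDiff)).mul_right hweight
  have hh1 (i : ι) := (((hu' i).h1Inner_right (e := e) (hu' i).contDiff).mul_right hweight)
  calc ∫ p, h2Sq e u p * Real.exp (-V p) ∂μ
      = ∫ p, (∑ i, h1Inner e (dirDeriv (e i) u) (dirDeriv (e i) u) p * Real.exp (-V p)) +
          u p ^ 2 * Real.exp (-V p) ∂μ := by
        simp only [← Finset.sum_mul, sum_h1Inner_dirDeriv_self, h2Sq, add_mul]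
    _ = (∑ i, ∫ p, dirDeriv (e i) u p * driftOp e V (dirDeriv (e i) u) p * Real.exp (-V p) ∂μ) +
          ∫ p, u p ^ 2 * Real.exp (-V p) ∂μ := by
        rw [integral_add (IsTestFunction.sum fun i _ => hh1 i).integrable
          (hu.sq.mul_right hweight).integrable, integral_finsetSum _ fun i _ => (hh1 i).integrable]
        simp only [integral_mul_driftOp_mul_exp hV (hu' _).contDiff (hu' _)]
    _ ≤ (∑ i, ∫ p, dirDeriv (e i) u p * driftOp e V (dirDeriv (e i) u) p * Real.exp (-V p) ∂μ) +
          ∫ p, u p * driftOp e V u p * Real.exp (-V p) ∂μ := by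
        rw [integral_mul_driftOp_mul_exp hV hu.contDiff hu]
        gcongr
        · exact (hu.sq.mul_right hweight).integrable
        · exact ((hu.h1Inner_right (e := e) hu.contDiff).mul_right hweight).integrable
        · exact fun p => mul_le_mul_of_nonneg_right sq_le_h1Inner_self (Real.exp_pos _).le
    _ ≤ ∫ p, h1Inner e u (driftOp e V u) p * Real.exp (-V p) ∂μ := by
        rw [← integral_finsetSum _ fun i _ => (hterm i).integrable, ← integral_add
          (IsTestFunction.sum fun i _ => hterm i).integrable
          ((hu.mul_right hLu.contDiff).mul_right hweight).integrable]
        refine integral_mono ((IsTestFunction.sum fun i _ => hterm i).add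
          ((hu.mul_right hLu.contDiff).mul_right hweight)).integrable
          ((hLu.h1Inner_right hu.contDiff).mul_right hweight).integrable fun p => ?_
        simp only [← Finset.sum_mul, ← add_mul, h1Inner]
        gcongr
        exact sum_mul_driftOp_dirDeriv_le_gradInner_driftOp hV hconv hu.contDiff p
    _ = ∫ p, driftOp e V u p ^ 2 * Real.exp (-V p) ∂μ := by
        simp only [← integral_mul_driftOp_mul_exp hV hu.contDiff hLu, pow_two]

lemma integral_sq_le_integral_mul_schrodingerOp_driftPotential (hV : ContDiff ℝ ∞ V)
    (hw : IsTestFunction w) :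
    ∫ p, w p ^ 2 ∂μ ≤ ∫ p, w p * schrodingerOp e (driftPotential e V) w p ∂μ := by
  have hweight : ContDiff ℝ ∞ fun p => Real.exp (-V p) := hV.neg.exp
  have hu : IsTestFunction fun p => w p * Real.exp (V p / 2) :=
    hw.mul_right (hV.div_const 2).exp
  have hexp (p : E) : Real.exp (V p / 2) * Real.exp (-V p) = Real.exp (-V p / 2) := by
    rw [← Real.exp_add]
    ring_nf
  have hsq (p : E) : w p ^ 2 = (w p * Real.exp (V p / 2)) ^ 2 * Real.exp (-V p) := by
    rw [mul_pow, ← Real.exp_nat_mul, mul_assoc, ← Real.exp_add]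
    ring_nf
    simp
  calc ∫ p, w p ^ 2 ∂μ
      ≤ ∫ p, h1Inner e (fun p => w p * Real.exp (V p / 2)) (fun p => w p * Real.exp (V p / 2)) p *
          Real.exp (-V p) ∂μ := by
        refine integral_mono hw.sq.integrable
          ((hu.h1Inner_right hu.contDiff).mul_right hweight).integrable fun p => ?_
        simp only [hsq]
        exact mul_le_mul_of_nonneg_right
          (sq_le_h1Inner_self (u := fun p => w p * Real.exp (V p / 2))) (Real.exp_pos _).le
    _ = ∫ p, w p * schrodingerOp e (driftPotential e V) w p ∂μ := by
        rw [← integral_mul_driftOp_mul_exp hV hu.contDiff hu]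
        refine integral_congr_ae (.of_forall fun p => ?_)
        simp only [← exp_mul_driftOp_mul_exp hV hw.contDiff, ← hexp p]
        ring

-- The cross terms add up to the divergence of `χ q² ∇χ`.
lemma integral_mul_schrodingerOp_mul (hQ : Continuous Q) (hq : ContDiff ℝ ∞ q)
    (hχ : IsTestFunction χ) :
    ∫ p, χ p * q p * schrodingerOp e Q (fun p => χ p * q p) p ∂μ =
      ∫ p, gradInner e χ χ p * q p ^ 2 + χ p ^ 2 * (q p * schrodingerOp e Q q p) ∂μ := by
  have hχq : IsTestFunction fun p => χ p * q p := hχ.mul_right hq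
  have hX : IsTestFunction fun p => χ p * (q p * q p) := hχ.mul_right (hq.mul hq)
  have hdiv := integral_sum_dirDeriv_eq_zero (μ := μ) (e := e)
    fun i => hX.mul_right (hχ.dirDeriv (e i)).contDiff
  have hS {f : E → ℝ} (hf : ContDiff ℝ ∞ f) : Continuous (schrodingerOp e Q f) :=
    (hQ.mul hf.continuous).sub (contDiff_frameLaplacian hf).continuous
  have hint_left : Integrable (fun p => χ p * q p * schrodingerOp e Q (fun p => χ p * q p) p) μ :=
    (hχq.continuous.mul (hS hχq.contDiff)).integrable_of_hasCompactSupport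
      hχq.hasCompactSupport.mul_right
  have hint_right : Integrable (fun p => gradInner e χ χ p * q p ^ 2 +
      χ p ^ 2 * (q p * schrodingerOp e Q q p)) μ :=
    ((hχ.gradInner_right hχ.contDiff).mul_right (hq.pow 2)).integrable.add
      ((hχ.sq.continuous.mul (hq.continuous.mul (hS hq))).integrable_of_hasCompactSupport
        hχ.sq.hasCompactSupport.mul_right)
  rw [← sub_eq_zero, ← neg_eq_zero, ← hdiv, ← integral_sub hint_left hint_right, ← integral_neg]
  refine integral_congr_ae (.of_forall fun p => ?_)
  have hq_diff := hq.differentiable (by simp) p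
  simp only [sum_dirDeriv_mul (hX.differentiable p) hχ.contDiff]
  rw [gradInner_comm (u := fun p => χ p * (q p * q p)),
    gradInner_mul_right (hχ.differentiable p) (hq_diff.fun_mul hq_diff),
    gradInner_mul_right hq_diff hq_diff, schrodingerOp, schrodingerOp,
    frameLaplacian_mul hχ.contDiff hq]
  ring

end Integral

/-! ### Mollification of weak null solutions -/

section Pointwise

variable {E : Type*} [NormedAddCommGroup E] [NormedSpace ℝ E] {ι : Type*} [Fintype ι] {e : ι → E}
  {k χ Q : E → ℝ}

lemma frameLaplacian_comp_const_sub (hk : IsTestFunction k) (x y : E) :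
    frameLaplacian e (fun y => k (x - y)) y = frameLaplacian e k (x - y) := by
  have hfirst (i : ι) : dirDeriv (e i) (fun y => k (x - y)) =
      fun y => -dirDeriv (e i) k (x - y) :=
    funext fun y => dirDeriv_comp_const_sub x (hk.differentiable _)
  simp only [frameLaplacian, hfirst, dirDeriv_neg,
    dirDeriv_comp_const_sub x ((hk.dirDeriv _).differentiable _), neg_neg]

lemma gradInner_mul_sq_add_le {m : E → ℝ} {a c δ : ℝ} {x : E} (hχ : |χ x| ≤ 1)
    (hgrad : gradInner e χ χ x ≤ c) (hm : |m x| ≤ a)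
    (hS : |schrodingerOp e Q m x| ≤ δ * a) :
    gradInner e χ χ x * m x ^ 2 + χ x ^ 2 * (m x * schrodingerOp e Q m x) ≤ (c + δ) * a ^ 2 := by
  have ha : 0 ≤ a := (abs_nonneg _).trans hm
  have hχ2 : χ x ^ 2 ≤ 1 := (sq_le_one_iff_abs_le_one _).2 hχ
  have hm2 : m x ^ 2 ≤ a ^ 2 := sq_le_sq' (abs_le.1 hm).1 (abs_le.1 hm).2
  have hgrad_m : gradInner e χ χ x * m x ^ 2 ≤ c * a ^ 2 :=
    mul_le_mul hgrad hm2 (sq_nonneg _) (gradInner_self_nonneg.trans hgrad)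
  have hmS : |m x * schrodingerOp e Q m x| ≤ a * (δ * a) := by
    rw [abs_mul]
    exact mul_le_mul hm hS (abs_nonneg _) ha
  have hχmS : χ x ^ 2 * (m x * schrodingerOp e Q m x) ≤ a * (δ * a) :=
    (mul_le_mul_of_nonneg_left (le_abs_self _) (sq_nonneg _)).trans
      ((mul_le_of_le_one_left (abs_nonneg _) hχ2).trans hmS)
  linarith

end Pointwise

section Convolution

variable {E : Type*} [NormedAddCommGroup E] [MeasurableSpace E] [BorelSpace E]
  {μ : Measure E} {ι : Type*} [Fintype ι] {e : ι → E} {q k : E → ℝ}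

lemma integrable_mul_comp_sub (hq : LocallyIntegrable q μ) (hk : Continuous k)
    (hck : HasCompactSupport k) (x : E) : Integrable (fun t => q t * k (x - t)) μ :=
  hck.convolutionExists_right (ContinuousLinearMap.mul ℝ ℝ) hq hk x

variable [NormedSpace ℝ E] [FiniteDimensional ℝ E] [μ.IsAddHaarMeasure]

lemma dirDeriv_convolution (hq : LocallyIntegrable q μ) (hk : IsTestFunction k) (v : E) :
    dirDeriv v (q ⋆[ContinuousLinearMap.mul ℝ ℝ, μ] k) =
      q ⋆[ContinuousLinearMap.mul ℝ ℝ, μ] dirDeriv v k := by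
  ext x
  have hfderiv := hk.hasCompactSupport.hasFDerivAt_convolution_right
    (ContinuousLinearMap.mul ℝ ℝ) hq (hk.contDiff.of_le (by simp)) x
  rw [dirDeriv, hfderiv.fderiv, convolution_precompR_apply _ hq
    (hk.hasCompactSupport.fderiv (𝕜 := ℝ)) (hk.contDiff.continuous_fderiv (by simp))]
  rfl

lemma frameLaplacian_convolution (hq : LocallyIntegrable q μ) (hk : IsTestFunction k) (x : E) :
    frameLaplacian e (q ⋆[ContinuousLinearMap.mul ℝ ℝ, μ] k) x =
      (q ⋆[ContinuousLinearMap.mul ℝ ℝ, μ] frameLaplacian e k) x := by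
  have hterm (i : ι) := (hk.dirDeriv (e i)).dirDeriv (e i)
  simp only [frameLaplacian, dirDeriv_convolution hq hk, dirDeriv_convolution hq (hk.dirDeriv _)]
  simp only [convolution, ContinuousLinearMap.mul_apply', frameLaplacian, Finset.mul_sum]
  exact (integral_finsetSum _ fun i _ =>
    integrable_mul_comp_sub hq (hterm i).continuous (hterm i).hasCompactSupport x).symm

end Convolution

section Mollifier

variable {E : Type*} [NormedAddCommGroup E] [NormedSpace ℝ E] [MeasurableSpace E]

/-- A mollification kernel: a nonnegative test function of total mass one. -/
structure IsMollifier (μ : Measure E) (k : E → ℝ) : Prop extends IsTestFunction k where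
  nonneg : ∀ x, 0 ≤ k x
  integral_eq_one : ∫ x, k x ∂μ = 1

variable {μ : Measure E} {ι : Type*} [Fintype ι] {e : ι → E} {q k χ Q : E → ℝ}

lemma IsMollifier.abs_convolution_le (hk : IsMollifier μ k) (q : E → ℝ) (x : E) :
    |(q ⋆[ContinuousLinearMap.mul ℝ ℝ, μ] k) x| ≤
      ((fun t => |q t|) ⋆[ContinuousLinearMap.mul ℝ ℝ, μ] k) x := by
  refine abs_integral_le_integral_abs.trans_eq (integral_congr_ae (.of_forall fun t => ?_))
  simp [abs_mul, abs_of_nonneg (hk.nonneg _)]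

/-- `q` is a weak solution of `(-Δ + Q) q = 0`. -/
def IsWeakNullSolution (e : ι → E) (μ : Measure E) (Q q : E → ℝ) : Prop :=
  ∀ η, IsTestFunction η → ∫ x, q x * schrodingerOp e Q η x ∂μ = 0

variable [BorelSpace E] [FiniteDimensional ℝ E] [μ.IsAddHaarMeasure]

-- Only the commutator of `Q` with the convolution survives.
lemma IsWeakNullSolution.schrodingerOp_convolution_eq (hnull : IsWeakNullSolution e μ Q q)
    (hQ : Continuous Q) (hq : LocallyIntegrable q μ) (hk : IsTestFunction k) (x : E) :
    schrodingerOp e Q (q ⋆[ContinuousLinearMap.mul ℝ ℝ, μ] k) x =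
      ∫ t, (Q x - Q t) * (q t * k (x - t)) ∂μ := by
  have hQq : LocallyIntegrable (fun t => q t * Q t) μ := locallyIntegrableOn_univ.1 <|
    (locallyIntegrableOn_univ.2 hq).mul_continuousOn hQ.continuousOn isOpen_univ.isLocallyClosed
  have hqk := integrable_mul_comp_sub hq hk.continuous hk.hasCompactSupport x
  have hQqk := integrable_mul_comp_sub hQq hk.continuous hk.hasCompactSupport x
  have hq_lap := integrable_mul_comp_sub hq (hk.frameLaplacian (e := e)).continuous
    hk.frameLaplacian.hasCompactSupport x
  have htested : (∫ t, q t * Q t * k (x - t) ∂μ) =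
      ∫ t, q t * frameLaplacian e k (x - t) ∂μ := by
    rw [← sub_eq_zero, ← integral_sub hQqk hq_lap, ← hnull _ (hk.comp_const_sub x)]
    refine integral_congr_ae (.of_forall fun t => ?_)
    simp only [schrodingerOp, frameLaplacian_comp_const_sub hk]
    ring
  rw [schrodingerOp, frameLaplacian_convolution hq hk]
  simp only [convolution, ContinuousLinearMap.mul_apply']
  rw [← htested, ← integral_const_mul, ← integral_sub (hqk.const_mul _) hQqk]
  exact integral_congr_ae (.of_forall fun t => by ring)

lemma IsWeakNullSolution.abs_schrodingerOp_convolution_le (hnull : IsWeakNullSolution e μ Q q)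
    (hQ : Continuous Q) (hq : LocallyIntegrable q μ) (hk : IsMollifier μ k) {δ : ℝ} {x : E}
    (hδ : ∀ t, k (x - t) ≠ 0 → |Q x - Q t| ≤ δ) :
    |schrodingerOp e Q (q ⋆[ContinuousLinearMap.mul ℝ ℝ, μ] k) x| ≤
      δ * ((fun t => |q t|) ⋆[ContinuousLinearMap.mul ℝ ℝ, μ] k) x := by
  rw [hnull.schrodingerOp_convolution_eq hQ hq hk.toIsTestFunction]
  simp only [convolution, ContinuousLinearMap.mul_apply']
  rw [← integral_const_mul]
  have hint := integrable_mul_comp_sub (fun y => (hq y).norm) hk.continuous hk.hasCompactSupport x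
  refine abs_integral_le_integral_abs.trans (integral_mono_of_nonneg
    (.of_forall fun t => abs_nonneg _) (hint.const_mul δ) (.of_forall fun t => ?_))
  by_cases hkt : k (x - t) = 0
  · simp [hkt]
  · simp only [abs_mul, abs_of_nonneg (hk.nonneg _)]
    exact mul_le_mul_of_nonneg_right (hδ t hkt) (mul_nonneg (abs_nonneg _) (hk.nonneg _))

lemma IsMollifier.convolution_sq_le (hk : IsMollifier μ k) (hq : LocallyIntegrable q μ)
    (hq2 : LocallyIntegrable (fun t => q t ^ 2) μ) (x : E) :
    (q ⋆[ContinuousLinearMap.mul ℝ ℝ, μ] k) x ^ 2 ≤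
      ((fun t => q t ^ 2) ⋆[ContinuousLinearMap.mul ℝ ℝ, μ] k) x := by
  have hkx := hk.integrable (μ := μ).comp_sub_left x
  have hqk := integrable_mul_comp_sub hq hk.continuous hk.hasCompactSupport x
  have hq2k := integrable_mul_comp_sub hq2 hk.continuous hk.hasCompactSupport x
  have hmass : ∫ t, k (x - t) ∂μ = 1 := by
    rw [integral_sub_left_eq_self k μ x, hk.integral_eq_one]
  simp only [convolution, ContinuousLinearMap.mul_apply']
  set m := ∫ t, q t * k (x - t) ∂μ with hm
  have hvariance : 0 ≤ ∫ t, (q t - m) ^ 2 * k (x - t) ∂μ :=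
    integral_nonneg fun t => mul_nonneg (sq_nonneg _) (hk.nonneg _)
  have hexpand : ∫ t, (q t - m) ^ 2 * k (x - t) ∂μ = (∫ t, q t ^ 2 * k (x - t) ∂μ) - m ^ 2 := by
    have hdiff : Integrable (fun t => q t ^ 2 * k (x - t) - 2 * m * (q t * k (x - t))) μ :=
      hq2k.sub (hqk.const_mul _)
    rw [show (fun t => (q t - m) ^ 2 * k (x - t)) = fun t =>
      q t ^ 2 * k (x - t) - 2 * m * (q t * k (x - t)) + m ^ 2 * k (x - t) by ext t; ring,
      integral_add hdiff (hkx.const_mul _),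
      integral_sub hq2k (hqk.const_mul _), integral_const_mul, integral_const_mul, hmass, ← hm]
    ring
  linarith

lemma IsMollifier.integrable_sq_convolution_and_le (hk : IsMollifier μ k) (hq : MemLp q 2 μ) :
    Integrable (fun x => (q ⋆[ContinuousLinearMap.mul ℝ ℝ, μ] k) x ^ 2) μ ∧
      ∫ x, (q ⋆[ContinuousLinearMap.mul ℝ ℝ, μ] k) x ^ 2 ∂μ ≤ ∫ x, q x ^ 2 ∂μ := by
  have hq_loc : LocallyIntegrable q μ := hq.locallyIntegrable one_le_two
  have hpointwise := hk.convolution_sq_le hq_loc hq.integrable_sq.locallyIntegrable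
  have hconv : Integrable ((fun t => q t ^ 2) ⋆[ContinuousLinearMap.mul ℝ ℝ, μ] k) μ :=
    hq.integrable_sq.integrable_convolution _ hk.integrable
  have hmass : ∫ x, ((fun t => q t ^ 2) ⋆[ContinuousLinearMap.mul ℝ ℝ, μ] k) x ∂μ =
      ∫ x, q x ^ 2 ∂μ := by
    simp [integral_convolution _ hq.integrable_sq hk.integrable, hk.integral_eq_one]
  have hcont : Continuous (q ⋆[ContinuousLinearMap.mul ℝ ℝ, μ] k) :=
    hk.hasCompactSupport.continuous_convolution_right _ hq_loc hk.continuous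
  have hint : Integrable (fun x => (q ⋆[ContinuousLinearMap.mul ℝ ℝ, μ] k) x ^ 2) μ :=
    hconv.mono' (hcont.pow 2).aestronglyMeasurable (.of_forall fun x => by
      simpa [Real.norm_of_nonneg (sq_nonneg _)] using hpointwise x)
  exact ⟨hint, hmass ▸ integral_mono hint hconv hpointwise⟩

lemma IsWeakNullSolution.integral_sq_mul_convolution_le (hnull : IsWeakNullSolution e μ Q q)
    (hQ : Continuous Q) (hq : MemLp q 2 μ) (hk : IsMollifier μ k) (hχ : IsTestFunction χ)
    (hpos : ∀ w, IsTestFunction w → ∫ x, w x ^ 2 ∂μ ≤ ∫ x, w x * schrodingerOp e Q w x ∂μ)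
    (hχ_le : ∀ x, |χ x| ≤ 1) {c δ : ℝ} (hδ : 0 ≤ δ)
    (hgrad : ∀ x, gradInner e χ χ x ≤ c)
    (hosc : ∀ x ∈ tsupport χ, ∀ t, k (x - t) ≠ 0 → |Q x - Q t| ≤ δ) :
    ∫ x, (χ x * (q ⋆[ContinuousLinearMap.mul ℝ ℝ, μ] k) x) ^ 2 ∂μ ≤
      (c + δ) * ∫ x, q x ^ 2 ∂μ := by
  have hc : 0 ≤ c := gradInner_self_nonneg.trans (hgrad 0)
  have hq_loc : LocallyIntegrable q μ := hq.locallyIntegrable one_le_two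
  set m : E → ℝ := q ⋆[ContinuousLinearMap.mul ℝ ℝ, μ] k
  set a : E → ℝ := (fun t => |q t|) ⋆[ContinuousLinearMap.mul ℝ ℝ, μ] k
  have hm_smooth : ContDiff ℝ ∞ m :=
    hk.hasCompactSupport.contDiff_convolution_right _ hq_loc hk.contDiff
  obtain ⟨ha_int, ha_le⟩ := hk.integrable_sq_convolution_and_le (q := fun t => |q t|) hq.abs
  have hpointwise (x : E) : gradInner e χ χ x * m x ^ 2 +
      χ x ^ 2 * (m x * schrodingerOp e Q m x) ≤ (c + δ) * a x ^ 2 := by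
    by_cases hx : x ∈ tsupport χ
    · exact gradInner_mul_sq_add_le (hχ_le x) (hgrad x) (hk.abs_convolution_le q x)
        (hnull.abs_schrodingerOp_convolution_le hQ hq_loc hk (hosc x hx))
    · simpa [gradInner, dirDeriv_of_notMem_tsupport hx, image_eq_zero_of_notMem_tsupport hx]
        using mul_nonneg (add_nonneg hc hδ) (sq_nonneg (a x))
  have hint : Integrable (fun x => gradInner e χ χ x * m x ^ 2 +
      χ x ^ 2 * (m x * schrodingerOp e Q m x)) μ :=
    ((hχ.gradInner_right hχ.contDiff).mul_right (hm_smooth.pow 2)).integrable.add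
      ((hχ.sq.continuous.mul (hm_smooth.continuous.mul ((hQ.mul hm_smooth.continuous).sub
        (contDiff_frameLaplacian hm_smooth).continuous))).integrable_of_hasCompactSupport
        hχ.sq.hasCompactSupport.mul_right)
  calc ∫ x, (χ x * m x) ^ 2 ∂μ
      ≤ ∫ x, χ x * m x * schrodingerOp e Q (fun x => χ x * m x) x ∂μ :=
        hpos _ (hχ.mul_right hm_smooth)
    _ = ∫ x, gradInner e χ χ x * m x ^ 2 + χ x ^ 2 * (m x * schrodingerOp e Q m x) ∂μ :=
        integral_mul_schrodingerOp_mul hQ hm_smooth hχ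
    _ ≤ ∫ x, (c + δ) * a x ^ 2 ∂μ := integral_mono hint (ha_int.const_mul _) hpointwise
    _ = (c + δ) * ∫ x, a x ^ 2 ∂μ := integral_const_mul _ _
    _ ≤ (c + δ) * ∫ x, q x ^ 2 ∂μ := by
        simp only [sq_abs] at ha_le
        exact mul_le_mul_of_nonneg_left ha_le (add_nonneg hc hδ)

end Mollifier

/-! ### Square-integrable weak null solutions vanish -/

section Fatou

variable {α : Type*} [MeasurableSpace α] {μ : Measure α}

lemma integral_le_of_tendsto_ae {F : ℕ → α → ℝ} {g : α → ℝ} (hF : ∀ n, Integrable (F n) μ)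
    (hF_nonneg : ∀ n x, 0 ≤ F n x) (hg : Integrable g μ) (hg_nonneg : ∀ x, 0 ≤ g x)
    (hlim : ∀ᵐ x ∂μ, Tendsto (fun n => F n x) atTop (𝓝 (g x))) {B : ℝ}
    (hB : ∀ᶠ n in atTop, ∫ x, F n x ∂μ ≤ B) : ∫ x, g x ∂μ ≤ B := by
  have hmin (n : ℕ) : Integrable (fun x => min (F n x) (g x)) μ := (hF n).inf hg
  have htend : Tendsto (fun n => ∫ x, min (F n x) (g x) ∂μ) atTop (𝓝 (∫ x, g x ∂μ)) := by
    refine tendsto_integral_of_dominated_convergence g (fun n => (hmin n).1) hg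
      (fun n => .of_forall fun x => ?_) ?_
    · rw [Real.norm_of_nonneg (le_min (hF_nonneg n x) (hg_nonneg x))]
      exact min_le_right _ _
    · filter_upwards [hlim] with x hx
      simpa using hx.min (tendsto_const_nhds (x := g x))
  refine le_of_tendsto htend ?_
  filter_upwards [hB] with n hn
  exact (integral_mono (hmin n) (hF n) fun x => min_le_left _ _).trans hn

lemma memLp_two_mul_of_abs_le_one {χ q : α → ℝ} (hχ : AEStronglyMeasurable χ μ)
    (hχ_le : ∀ x, |χ x| ≤ 1) (hq : MemLp q 2 μ) : MemLp (fun x => χ x * q x) 2 μ :=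
  hq.of_le (hχ.mul hq.1) <| .of_forall fun x => by
    rw [norm_mul]
    exact mul_le_of_le_one_left (norm_nonneg _) (hχ_le x)

end Fatou

section Cutoff

variable {E : Type*} [NormedAddCommGroup E] [NormedSpace ℝ E] {ι : Type*} [Fintype ι] (e : ι → E)

lemma gradInner_comp_add_smul {u : E → ℝ} (hu : Differentiable ℝ u) (a : E) (c : ℝ) (p : E) :
    gradInner e (fun x => u (a + c • x)) (fun x => u (a + c • x)) p =
      c ^ 2 * gradInner e u u (a + c • p) := by
  simp only [gradInner, dirDeriv_comp_add_smul a c (hu _), Finset.mul_sum]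
  exact Finset.sum_congr rfl fun i _ => by ring

lemma exists_cutoff_seq [FiniteDimensional ℝ E] : ∃ (χ : ℕ → E → ℝ) (c : ℕ → ℝ),
    (∀ n, IsTestFunction (χ n)) ∧ (∀ n x, |χ n x| ≤ 1) ∧
    (∀ n x, gradInner e (χ n) (χ n) x ≤ c n) ∧ Tendsto c atTop (𝓝 0) ∧
    ∀ x, Tendsto (fun n => χ n x) atTop (𝓝 1) := by
  let b : ContDiffBump (0 : E) := ⟨1, 2, one_pos, one_lt_two⟩
  have hb : IsTestFunction b := ⟨b.contDiff, b.hasCompactSupport⟩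
  have hgrad := hb.gradInner_right (e := e) hb.contDiff
  obtain ⟨C, hC⟩ := hgrad.hasCompactSupport.exists_bound_of_continuous hgrad.continuous
  have hscale : Tendsto (fun n : ℕ => 1 / ((n : ℝ) + 1)) atTop (𝓝 0) :=
    tendsto_one_div_add_atTop_nhds_zero_nat
  refine ⟨fun n x => b (0 + (1 / ((n : ℝ) + 1)) • x), fun n => (1 / ((n : ℝ) + 1)) ^ 2 * C,
    fun n => hb.comp_add_smul 0 (by positivity), fun n x => ?_, fun n x => ?_, ?_, fun x => ?_⟩
  · rw [abs_of_nonneg b.nonneg]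
    exact b.le_one
  · rw [gradInner_comp_add_smul e hb.differentiable]
    exact mul_le_mul_of_nonneg_left ((le_abs_self _).trans (hC _)) (sq_nonneg _)
  · simpa using (hscale.pow 2).mul_const C
  · have harg : Tendsto (fun n : ℕ => 0 + (1 / ((n : ℝ) + 1)) • x) atTop (𝓝 0) := by
      simpa using (hscale.smul_const x).const_add 0
    have hb_zero : b 0 = 1 := b.one_of_mem_closedBall (by simp [b])
    simpa [Function.comp_def, hb_zero] using (hb.continuous.tendsto 0).comp harg

end Cutoff

section WeakNullSolution

variable {E : Type*} [NormedAddCommGroup E] [NormedSpace ℝ E] [FiniteDimensional ℝ E]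
  [MeasurableSpace E] [BorelSpace E] (μ : Measure E) [μ.IsAddHaarMeasure]

lemma exists_mollifier_seq : ∃ k : ℕ → E → ℝ, (∀ n, IsMollifier μ (k n)) ∧
    (∀ n x, k n x ≠ 0 → ‖x‖ < 1 / ((n : ℝ) + 1)) ∧
    ∀ q, LocallyIntegrable q μ → ∀ᵐ x ∂μ,
      Tendsto (fun n => (q ⋆[ContinuousLinearMap.mul ℝ ℝ, μ] k n) x) atTop (𝓝 (q x)) := by
  let b (n : ℕ) : ContDiffBump (0 : E) :=
    ⟨1 / ((n : ℝ) + 1) / 2, 1 / ((n : ℝ) + 1), by positivity, half_lt_self (by positivity)⟩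
  refine ⟨fun n => (b n).normed μ,
    fun n => ⟨⟨(b n).contDiff_normed, (b n).hasCompactSupport_normed⟩,
      (b n).nonneg_normed, (b n).integral_normed⟩, fun n x hx => ?_, fun q hq => ?_⟩
  · exact mem_ball_zero_iff.1 ((b n).support_normed_eq (μ := μ).subset hx)
  · have hae := ContDiffBump.ae_convolution_tendsto_right_of_locallyIntegrable (μ := μ)
      (φ := b) (l := atTop) (K := 2) tendsto_one_div_add_atTop_nhds_zero_nat
      (.of_forall fun n => by simp only [b]; linarith) hq
    filter_upwards [hae] with x hx
    refine hx.congr fun n => ?_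
    rw [convolution_eq_swap]
    simp only [convolution, ContinuousLinearMap.lsmul_apply, ContinuousLinearMap.mul_apply',
      smul_eq_mul, mul_comm]

variable {μ} {ι : Type*} [Fintype ι] {e : ι → E} {q χ Q : E → ℝ}

lemma IsWeakNullSolution.integral_sq_mul_le (hnull : IsWeakNullSolution e μ Q q)
    (hQ : Continuous Q) (hq : MemLp q 2 μ) (hχ : IsTestFunction χ)
    (hpos : ∀ w, IsTestFunction w → ∫ x, w x ^ 2 ∂μ ≤ ∫ x, w x * schrodingerOp e Q w x ∂μ)
    (hχ_le : ∀ x, |χ x| ≤ 1) {c : ℝ} (hgrad : ∀ x, gradInner e χ χ x ≤ c) :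
    ∫ x, (χ x * q x) ^ 2 ∂μ ≤ c * ∫ x, q x ^ 2 ∂μ := by
  have hq_loc : LocallyIntegrable q μ := hq.locallyIntegrable one_le_two
  obtain ⟨k, hk, hk_supp, hk_lim⟩ := exists_mollifier_seq μ
  have hbound (δ : ℝ) (hδ : 0 < δ) : ∫ x, (χ x * q x) ^ 2 ∂μ ≤ (c + δ) * ∫ x, q x ^ 2 ∂μ := by
    obtain ⟨r, hr, hosc⟩ := Metric.uniformContinuousOn_iff.1
      (hχ.hasCompactSupport.cthickening (r := 1) |>.uniformContinuousOn_of_continuous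
        hQ.continuousOn) δ hδ
    refine integral_le_of_tendsto_ae
      (F := fun n x => (χ x * (q ⋆[ContinuousLinearMap.mul ℝ ℝ, μ] k n) x) ^ 2)
      (fun n => (hχ.mul_right ((hk n).hasCompactSupport.contDiff_convolution_right _ hq_loc
        (hk n).contDiff)).sq.integrable)
      (fun n x => sq_nonneg _)
      (memLp_two_mul_of_abs_le_one hχ.continuous.aestronglyMeasurable hχ_le hq).integrable_sq
      (fun x => sq_nonneg _) ?_ ?_
    · filter_upwards [hk_lim q hq_loc] with x hx
      exact (hx.const_mul _).pow 2
    · have hsmall (r : ℝ) (hr : 0 < r) : ∀ᶠ n : ℕ in atTop, 1 / ((n : ℝ) + 1) < r :=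
        tendsto_one_div_add_atTop_nhds_zero_nat.eventually (gt_mem_nhds hr)
      filter_upwards [hsmall r hr, hsmall 1 one_pos] with n hnr hn_one
      refine hnull.integral_sq_mul_convolution_le hQ hq (hk n) hχ hpos hχ_le hδ.le hgrad
        fun x hx t ht => ?_
      have hdist : dist x t < 1 / ((n : ℝ) + 1) := dist_eq_norm x t ▸ hk_supp n _ ht
      exact (hosc x (Metric.self_subset_cthickening _ hx) t (Metric.mem_cthickening_of_dist_le t x 1
        _ hx (dist_comm x t ▸ (hdist.trans hn_one).le)) (hdist.trans hnr)).le
  have hlim : Tendsto (fun δ : ℝ => (c + δ) * ∫ x, q x ^ 2 ∂μ) (𝓝[>] 0)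
      (𝓝 ((c + 0) * ∫ x, q x ^ 2 ∂μ)) :=
    ((tendsto_const_nhds.add tendsto_id).mul_const _).mono_left nhdsWithin_le_nhds
  rw [add_zero] at hlim
  exact ge_of_tendsto hlim (eventually_mem_nhdsWithin.mono hbound)

lemma IsWeakNullSolution.ae_eq_zero (hnull : IsWeakNullSolution e μ Q q) (hQ : Continuous Q)
    (hq : MemLp q 2 μ)
    (hpos : ∀ w, IsTestFunction w → ∫ x, w x ^ 2 ∂μ ≤ ∫ x, w x * schrodingerOp e Q w x ∂μ) :
    q =ᵐ[μ] 0 := by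
  obtain ⟨χ, c, hχ, hχ_le, hgrad, hc, hχ_lim⟩ := exists_cutoff_seq e
  have hnonpos : ∫ x, q x ^ 2 ∂μ ≤ 0 := by
    refine le_of_forall_pos_le_add fun ε hε => ?_
    refine integral_le_of_tendsto_ae (fun n => (memLp_two_mul_of_abs_le_one
      (hχ n).continuous.aestronglyMeasurable (hχ_le n) hq).integrable_sq) (fun n x => sq_nonneg _)
      hq.integrable_sq (fun x => sq_nonneg _) (.of_forall fun x => ?_) ?_
    · simpa using ((hχ_lim x).mul_const (q x)).pow 2
    · have hlim : Tendsto (fun n => c n * ∫ x, q x ^ 2 ∂μ) atTop (𝓝 0) := by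
        simpa using hc.mul_const (∫ x, q x ^ 2 ∂μ)
      filter_upwards [hlim.eventually (gt_mem_nhds hε)] with n hn
      simpa using (hnull.integral_sq_mul_le hQ hq (hχ n) hpos (hχ_le n) (hgrad n)).trans hn.le
  have hsq := (integral_eq_zero_iff_of_nonneg (fun x => sq_nonneg (q x)) hq.integrable_sq).1
    (hnonpos.antisymm (integral_nonneg fun x => sq_nonneg _))
  filter_upwards [hsq] with x hx
  exact pow_eq_zero_iff two_ne_zero |>.1 hx

end WeakNullSolution

/-! ### Approximate solvability on the whole space -/

section Density

variable {α : Type*} [MeasurableSpace α] {μ : Measure α}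

-- A submodule of a Hilbert space with trivial orthogonal complement is dense.
lemma exists_integral_sq_sub_le {K : Submodule ℝ (α → ℝ)} (hK : ∀ g ∈ K, MemLp g 2 μ)
    (horth : ∀ q, MemLp q 2 μ → (∀ g ∈ K, ∫ x, q x * g x ∂μ = 0) → q =ᵐ[μ] 0) {f : α → ℝ}
    (hf : MemLp f 2 μ) {ε : ℝ} (hε : 0 < ε) : ∃ g ∈ K, ∫ x, (g x - f x) ^ 2 ∂μ ≤ ε := by
  let T : K →ₗ[ℝ] Lp ℝ 2 μ :=
    { toFun := fun g => (hK g g.2).toLp g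
      map_add' := fun g g' => MemLp.toLp_add (hK g g.2) (hK g' g'.2)
      map_smul' := fun c g => MemLp.toLp_const_smul c (hK g g.2) }
  have hdense : (LinearMap.range T).topologicalClosure = ⊤ := by
    rw [Submodule.topologicalClosure_eq_top_iff, Submodule.eq_bot_iff]
    refine fun q hq => Lp.eq_zero_iff_ae_eq_zero.2 (horth q (Lp.memLp q) fun g hg => ?_)
    rw [← (Submodule.mem_orthogonal _ _).1 hq (T ⟨g, hg⟩) ⟨_, rfl⟩, L2.inner_def]
    refine integral_congr_ae ?_
    filter_upwards [(hK g hg).coeFn_toLp] with x hx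
    simp [T, hx]
  have hmem : hf.toLp f ∈ closure (LinearMap.range T : Set (Lp ℝ 2 μ)) := by
    rw [← Submodule.topologicalClosure_coe, hdense]
    trivial
  obtain ⟨_, ⟨g, rfl⟩, hdist⟩ := Metric.mem_closure_iff.1 hmem (√ε) (Real.sqrt_pos.2 hε)
  refine ⟨g, g.2, ?_⟩
  have hnorm : ‖((hK g g.2).sub hf).toLp _‖ ^ 2 = ∫ x, ((g : α → ℝ) x - f x) ^ 2 ∂μ := by
    rw [← real_inner_self_eq_norm_sq, L2.inner_def]
    refine integral_congr_ae ?_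
    filter_upwards [((hK g g.2).sub hf).coeFn_toLp] with x hx
    simp [hx, sq]
  rw [dist_comm, dist_eq_norm, show T g = (hK g g.2).toLp g from rfl,
    ← MemLp.toLp_sub (hK g g.2) hf] at hdist
  rw [← hnorm, ← Real.sq_sqrt hε.le]
  exact pow_le_pow_left₀ (norm_nonneg _) hdist.le 2

end Density

section Solvability

variable {E : Type*} [NormedAddCommGroup E] [NormedSpace ℝ E] {ι : Type*} [Fintype ι]

/-- The range of `-Δ + Q` on test functions. -/
def schrodingerRange (e : ι → E) (Q : E → ℝ) : Submodule ℝ (E → ℝ) where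
  carrier := {g | ∃ η, IsTestFunction η ∧ schrodingerOp e Q η = g}
  zero_mem' := by
    refine ⟨fun _ => 0, ⟨contDiff_const, .zero⟩, funext fun p => ?_⟩
    have hfirst (i : ι) : dirDeriv (e i) (fun _ => (0 : ℝ)) = fun _ => 0 :=
      funext fun q => by simp [dirDeriv]
    simp [schrodingerOp, frameLaplacian, hfirst]
  add_mem' := by
    rintro _ _ ⟨η, hη, rfl⟩ ⟨ζ, hζ, rfl⟩
    refine ⟨_, hη.add hζ, funext fun p => ?_⟩
    have hfirst (i : ι) : dirDeriv (e i) (fun q => η q + ζ q) =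
        fun q => dirDeriv (e i) η q + dirDeriv (e i) ζ q :=
      funext fun q => dirDeriv_add (hη.differentiable q) (hζ.differentiable q)
    simp only [schrodingerOp, frameLaplacian, hfirst, Pi.add_apply, dirDeriv_add
      ((hη.dirDeriv _).differentiable p) ((hζ.dirDeriv _).differentiable p),
      Finset.sum_add_distrib]
    ring
  smul_mem' := by
    rintro c _ ⟨η, hη, rfl⟩
    refine ⟨_, hη.const_mul c, funext fun p => ?_⟩
    have hfirst (i : ι) : dirDeriv (e i) (fun q => c * η q) = fun q => c * dirDeriv (e i) η q :=
      funext fun q => dirDeriv_const_mul c (hη.differentiable q)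
    simp only [schrodingerOp, frameLaplacian, hfirst, Pi.smul_apply, smul_eq_mul,
      dirDeriv_const_mul c ((hη.dirDeriv _).differentiable p), ← Finset.mul_sum]
    ring

variable [FiniteDimensional ℝ E] [MeasurableSpace E] [BorelSpace E] {μ : Measure E}
  [μ.IsAddHaarMeasure]

lemma exists_integral_sq_exp_mul_driftOp_sub_le (e : ι → E) {V f : E → ℝ} (hV : ContDiff ℝ ∞ V)
    (hf : MemLp f 2 μ) {ε : ℝ} (hε : 0 < ε) : ∃ u, IsTestFunction u ∧
      ∫ p, (Real.exp (-V p / 2) * driftOp e V u p - f p) ^ 2 ∂μ ≤ ε := by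
  obtain ⟨_, ⟨η, hη, rfl⟩, hle⟩ :=
    exists_integral_sq_sub_le (μ := μ) (K := schrodingerRange e (driftPotential e V))
      (by rintro _ ⟨η, hη, rfl⟩; exact (hη.schrodingerOp_driftPotential hV).memLp_two)
      (fun q hq horth => IsWeakNullSolution.ae_eq_zero (fun η hη => horth _ ⟨η, hη, rfl⟩)
        (contDiff_driftPotential hV).continuous hq
        fun w => integral_sq_le_integral_mul_schrodingerOp_driftPotential hV) hf hε
  refine ⟨_, hη.mul_right (hV.div_const 2).exp, ?_⟩
  simpa only [exp_mul_driftOp_mul_exp hV hη.contDiff] using hle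

end Solvability

/-! ### Convex penalties -/

section ConvexPenalty

/-- A primitive of `expNegInvGlue`: a smooth convex function vanishing exactly on the nonpositive
half line. -/
def smoothRamp (t : ℝ) : ℝ := ∫ x in (0 : ℝ)..t, expNegInvGlue x

lemma hasDerivAt_smoothRamp (t : ℝ) : HasDerivAt smoothRamp (expNegInvGlue t) t :=
  have hcont : Continuous expNegInvGlue := (expNegInvGlue.contDiff (n := 0)).continuous
  intervalIntegral.integral_hasDerivAt_right (hcont.intervalIntegrable _ _)
    (hcont.stronglyMeasurableAtFilter _ _) hcont.continuousAt

lemma deriv_smoothRamp : deriv smoothRamp = expNegInvGlue :=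
  funext fun t => (hasDerivAt_smoothRamp t).deriv

lemma differentiable_smoothRamp : Differentiable ℝ smoothRamp :=
  fun t => (hasDerivAt_smoothRamp t).differentiableAt

lemma contDiff_smoothRamp : ContDiff ℝ ∞ smoothRamp := by
  rw [contDiff_infty_iff_deriv, deriv_smoothRamp]
  exact ⟨differentiable_smoothRamp, expNegInvGlue.contDiff⟩

lemma convexOn_smoothRamp : ConvexOn ℝ univ smoothRamp :=
  Monotone.convexOn_univ_of_deriv differentiable_smoothRamp
    (deriv_smoothRamp ▸ expNegInvGlue.monotone)

lemma smoothRamp_of_nonpos {t : ℝ} (ht : t ≤ 0) : smoothRamp t = 0 := by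
  rw [smoothRamp, intervalIntegral.integral_symm, intervalIntegral.integral_of_le ht,
    setIntegral_eq_zero_of_forall_eq_zero fun x hx => expNegInvGlue.zero_of_nonpos hx.2, neg_zero]

lemma smoothRamp_pos {t : ℝ} (ht : 0 < t) : 0 < smoothRamp t :=
  intervalIntegral.intervalIntegral_pos_of_pos_on
    ((expNegInvGlue.contDiff (n := 0)).continuous.intervalIntegrable _ _)
    (fun _ hx => expNegInvGlue.pos_of_pos hx.1) ht

lemma smoothRamp_nonneg (t : ℝ) : 0 ≤ smoothRamp t :=
  (le_or_gt t 0).elim (fun h => (smoothRamp_of_nonpos h).ge) fun h => (smoothRamp_pos h).le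

variable {E : Type*} [NormedAddCommGroup E] [NormedSpace ℝ E]

/-- A smooth convex penalty for leaving `K`: a nonnegative function vanishing on `K`. -/
structure IsConvexPenalty (K : Set E) (V : E → ℝ) : Prop where
  contDiff : ContDiff ℝ ∞ V
  convexOn : ConvexOn ℝ univ V
  nonneg : ∀ x, 0 ≤ V x
  eq_zero : ∀ x ∈ K, V x = 0

namespace IsConvexPenalty

variable {K : Set E} {V W : E → ℝ}

lemma zero : IsConvexPenalty K (fun _ => 0) :=
  ⟨contDiff_const, convexOn_const 0 convex_univ, fun _ => le_rfl, fun _ _ => rfl⟩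

lemma add (hV : IsConvexPenalty K V) (hW : IsConvexPenalty K W) :
    IsConvexPenalty K (fun x => V x + W x) :=
  ⟨hV.contDiff.add hW.contDiff, hV.convexOn.add hW.convexOn,
    fun x => add_nonneg (hV.nonneg x) (hW.nonneg x),
    fun x hx => by rw [hV.eq_zero x hx, hW.eq_zero x hx, add_zero]⟩

lemma sum {ι : Type*} {s : Finset ι} {F : ι → E → ℝ} (hF : ∀ i ∈ s, IsConvexPenalty K (F i)) :
    IsConvexPenalty K (fun x => ∑ i ∈ s, F i x) := by
  classical
  induction s using Finset.induction_on with
  | empty => simpa using zero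
  | insert i s hi ih =>
    simp only [Finset.sum_insert hi]
    exact (hF i (s.mem_insert_self i)).add (ih fun j hj => hF j (Finset.mem_insert_of_mem hj))

lemma const_mul (hV : IsConvexPenalty K V) {c : ℝ} (hc : 0 ≤ c) :
    IsConvexPenalty K (fun x => c * V x) :=
  ⟨contDiff_const.mul hV.contDiff, hV.convexOn.smul hc, fun x => mul_nonneg hc (hV.nonneg x),
    fun x hx => by rw [hV.eq_zero x hx, mul_zero]⟩

lemma smoothRamp_sub (f : E →L[ℝ] ℝ) {b : ℝ} (h : ∀ x ∈ K, f x ≤ b) :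
    IsConvexPenalty K (fun x => smoothRamp (f x - b)) where
  contDiff := contDiff_smoothRamp.comp (f.contDiff.sub contDiff_const)
  convexOn := convexOn_smoothRamp.comp_affineMap
    (f.toLinearMap.toAffineMap - AffineMap.const ℝ E b)
  nonneg _ := smoothRamp_nonneg _
  eq_zero x hx := smoothRamp_of_nonpos (sub_nonpos.2 (h x hx))

end IsConvexPenalty

lemma exists_seq_halfSpace_of_convex [SecondCountableTopology E] {K : Set E} (hK : Convex ℝ K)
    (hKc : IsClosed K) : ∃ (f : ℕ → E →L[ℝ] ℝ) (b : ℕ → ℝ),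
      (∀ n, ∀ x ∈ K, f n x ≤ b n) ∧ ∀ x ∉ K, ∃ n, b n < f n x := by
  let H := {fb : (E →L[ℝ] ℝ) × ℝ // ∀ x ∈ K, fb.1 x ≤ fb.2}
  let trivialHalfSpace : H := ⟨(0, 0), fun x _ => by simp⟩
  obtain ⟨T, hT, hTU⟩ := TopologicalSpace.isOpen_iUnion_countable
    (fun i : H => {x | i.1.2 < i.1.1 x}) fun i => isOpen_lt continuous_const i.1.1.continuous
  obtain ⟨s, hs⟩ := (hT.insert trivialHalfSpace).exists_eq_range (insert_nonempty _ _)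
  refine ⟨fun n => (s n).1.1, fun n => (s n).1.2, fun n => (s n).2, fun x hx => ?_⟩
  obtain ⟨f, b, hfb, hbx⟩ := geometric_hahn_banach_closed_point hK hKc hx
  have hmem : x ∈ ⋃ i ∈ T, {x | i.1.2 < i.1.1 x} :=
    hTU ▸ mem_iUnion.2 ⟨⟨(f, b), fun a ha => (hfb a ha).le⟩, hbx⟩
  obtain ⟨i, hi, hxi⟩ := mem_iUnion₂.1 hmem
  obtain ⟨n, rfl⟩ : i ∈ range s := hs ▸ mem_insert_of_mem _ hi
  exact ⟨n, hxi⟩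

lemma exists_seq_isConvexPenalty_tendsto_atTop [SecondCountableTopology E] {K : Set E}
    (hK : Convex ℝ K) (hKc : IsClosed K) : ∃ V : ℕ → E → ℝ,
      (∀ n, IsConvexPenalty K (V n)) ∧ ∀ x ∉ K, Tendsto (fun n => V n x) atTop atTop := by
  obtain ⟨f, b, hle, hlt⟩ := exists_seq_halfSpace_of_convex hK hKc
  refine ⟨fun n x => n * ∑ k ∈ Finset.range n, smoothRamp (f k x - b k), fun n =>
    (IsConvexPenalty.sum fun k _ => .smoothRamp_sub (f k) (hle k)).const_mul n.cast_nonneg,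
    fun x hx => ?_⟩
  obtain ⟨k, hk⟩ := hlt x hx
  refine tendsto_atTop_mono' _ ?_
    (tendsto_natCast_atTop_atTop.atTop_mul_const (smoothRamp_pos (sub_pos.2 hk)))
  filter_upwards [eventually_gt_atTop k] with n hn
  gcongr
  exact Finset.single_le_sum (f := fun k => smoothRamp (f k x - b k))
    (fun _ _ => smoothRamp_nonneg _) (Finset.mem_range.2 hn)

end ConvexPenalty

/-! ### Cutoffs and extensions -/

section Cutoff

variable {E : Type*} [NormedAddCommGroup E] [NormedSpace ℝ E] {K Ω : Set E} {φ χ : E → ℝ}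

lemma IsTestFunction.mul_contDiffOn (hχ : IsTestFunction χ) (hχΩ : tsupport χ ⊆ Ω)
    (hΩ : IsOpen Ω) (hφ : ContDiffOn ℝ ∞ φ Ω) : IsTestFunction fun x => χ x * φ x := by
  refine ⟨contDiff_iff_contDiffAt.2 fun x => ?_, hχ.hasCompactSupport.mul_right⟩
  by_cases hx : x ∈ tsupport χ
  · exact hχ.contDiff.contDiffAt.mul (hφ.contDiffAt (hΩ.mem_nhds (hχΩ hx)))
  · refine contDiffAt_const (c := 0) |>.congr_of_eventuallyEq ?_
    filter_upwards [(isClosed_tsupport χ).isOpen_compl.mem_nhds hx] with y hy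
    rw [image_eq_zero_of_notMem_tsupport hy, zero_mul]

variable [FiniteDimensional ℝ E]

lemma exists_isTestFunction_cutoff (hK : IsCompact K) (hΩ : IsOpen Ω) (h : K ⊆ Ω) :
    ∃ χ : E → ℝ, IsTestFunction χ ∧ tsupport χ ⊆ Ω ∧ (∀ x, χ x ∈ Icc (0 : ℝ) 1) ∧
      ∀ᶠ x in 𝓝ˢ K, χ x = 1 := by
  obtain ⟨L, hL, hKL, hLΩ⟩ := exists_compact_between hK hΩ h
  obtain ⟨χ, hone, hzero, hχ⟩ := exists_contMDiffMap_one_nhds_of_subset_interior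
    (n := ⊤) (modelWithCornersSelf ℝ E) hK.isClosed hKL
  have hsupp : tsupport χ ⊆ L :=
    closure_minimal (fun x hx => by_contra fun hxL => hx (hzero x hxL)) hL.isClosed
  exact ⟨χ, ⟨χ.contMDiff.contDiff, hL.of_isClosed_subset (isClosed_tsupport _) hsupp⟩,
    hsupp.trans hLΩ, hχ, hone⟩

lemma exists_isTestFunction_eventuallyEq (hK : IsCompact K) (hΩ : IsOpen Ω) (h : K ⊆ Ω)
    (hφ : ContDiffOn ℝ ∞ φ Ω) : ∃ ψ, IsTestFunction ψ ∧ ∀ x ∈ K, φ =ᶠ[𝓝 x] ψ := by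
  obtain ⟨χ, hχ, hsupp, -, hone⟩ := exists_isTestFunction_cutoff hK hΩ h
  refine ⟨_, hχ.mul_contDiffOn hsupp hΩ hφ, fun x hx => ?_⟩
  filter_upwards [hone.filter_mono (nhds_le_nhdsSet hx)] with y hy
  rw [hy, one_mul]

end Cutoff

/-! ### Density of test functions in `H¹` of a convex set -/

section MemH1

variable {E : Type*} [NormedAddCommGroup E] [NormedSpace ℝ E] [MeasurableSpace E] {ι : Type*}
  {e : ι → E} {u v : E → ℝ} {ν : Measure E}

/-- Membership in `H¹` of a function with classical derivatives: `u` and its derivatives along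
the frame `e` are square integrable. -/
structure MemH1 (e : ι → E) (u : E → ℝ) (ν : Measure E) : Prop where
  memLp : MemLp u 2 ν
  memLp_dirDeriv : ∀ i, MemLp (dirDeriv (e i) u) 2 ν

lemma IsTestFunction.memH1 [BorelSpace E] [IsFiniteMeasureOnCompacts ν] (hu : IsTestFunction u) :
    MemH1 e u ν :=
  ⟨hu.memLp_two, fun i => (hu.dirDeriv (e i)).memLp_two⟩

lemma MemH1.sub (hu : MemH1 e u ν) (hv : MemH1 e v ν) (hu_diff : ∀ᵐ p ∂ν, DifferentiableAt ℝ u p)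
    (hv_diff : ∀ᵐ p ∂ν, DifferentiableAt ℝ v p) : MemH1 e (fun p => u p - v p) ν := by
  refine ⟨hu.memLp.sub hv.memLp, fun i => ?_⟩
  refine ((hu.memLp_dirDeriv i).sub (hv.memLp_dirDeriv i)).ae_eq ?_
  filter_upwards [hu_diff, hv_diff] with p hup hvp
  exact (dirDeriv_sub hup hvp).symm

lemma MemH1.integrable_h1Inner [Fintype ι] (hu : MemH1 e u ν) (hv : MemH1 e v ν) :
    Integrable (h1Inner e u v) ν :=
  (integrable_finsetSum _ fun i _ => (hu.memLp_dirDeriv i).integrable_mul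
    (hv.memLp_dirDeriv i)).add (hu.memLp.integrable_mul hv.memLp)

end MemH1

section Dilation

lemma tendsto_integral_sq_sub_of_ae_of_integral_le {α : Type*} [MeasurableSpace α] {μ : Measure α}
    {F : ℕ → α → ℝ} {g : α → ℝ} (hF : ∀ n, MemLp (F n) 2 μ) (hg : MemLp g 2 μ)
    (hlim : ∀ᵐ x ∂μ, Tendsto (fun n => F n x) atTop (𝓝 (g x))) {b : ℕ → ℝ}
    (hb : Tendsto b atTop (𝓝 (∫ x, g x ^ 2 ∂μ))) (hFb : ∀ n, ∫ x, F n x ^ 2 ∂μ ≤ b n) :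
    Tendsto (fun n => ∫ x, (F n x - g x) ^ 2 ∂μ) atTop (𝓝 0) := by
  have hmin_int (n) : Integrable (fun x => min ((F n x + g x) ^ 2) (4 * g x ^ 2)) μ :=
    ((hF n).add hg).integrable_sq.inf (hg.integrable_sq.const_mul 4)
  have hmin : Tendsto (fun n => ∫ x, min ((F n x + g x) ^ 2) (4 * g x ^ 2) ∂μ) atTop
      (𝓝 (∫ x, 4 * g x ^ 2 ∂μ)) := by
    refine tendsto_integral_of_dominated_convergence (fun x => 4 * g x ^ 2)
      (fun n => (hmin_int n).1) (hg.integrable_sq.const_mul 4)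
      (fun n => .of_forall fun x => ?_) ?_
    · rw [Real.norm_of_nonneg (le_min (by positivity) (by positivity))]
      exact min_le_right _ _
    · filter_upwards [hlim] with x hx
      convert ((hx.add_const (g x)).pow 2).min (tendsto_const_nhds (x := 4 * g x ^ 2)) using 2
      rw [show (g x + g x) ^ 2 = 4 * g x ^ 2 by ring, min_self]
  have hparallelogram (n) : ∫ x, (F n x - g x) ^ 2 ∂μ + ∫ x, (F n x + g x) ^ 2 ∂μ =
      2 * ∫ x, F n x ^ 2 ∂μ + 2 * ∫ x, g x ^ 2 ∂μ := by
    rw [← integral_const_mul, ← integral_const_mul, ← integral_add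
      ((hF n).integrable_sq.const_mul 2) (hg.integrable_sq.const_mul 2)]
    refine (integral_add ((hF n).sub hg).integrable_sq
      ((hF n).add hg).integrable_sq).symm.trans (integral_congr_ae (.of_forall fun x => ?_))
    simp only [Pi.add_apply, Pi.sub_apply]
    ring
  have hupper : Tendsto (fun n => 2 * b n + 2 * ∫ x, g x ^ 2 ∂μ -
      ∫ x, min ((F n x + g x) ^ 2) (4 * g x ^ 2) ∂μ) atTop (𝓝 0) := by
    convert ((hb.const_mul 2).add_const (2 * ∫ x, g x ^ 2 ∂μ)).sub hmin using 2
    rw [integral_const_mul]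
    ring
  refine squeeze_zero (fun n => integral_nonneg fun x => sq_nonneg _) (fun n => ?_) hupper
  have hle : ∫ x, min ((F n x + g x) ^ 2) (4 * g x ^ 2) ∂μ ≤ ∫ x, (F n x + g x) ^ 2 ∂μ :=
    integral_mono (hmin_int n) ((hF n).add hg).integrable_sq fun x => min_le_left _ _
  linarith [hparallelogram n, hFb n]

variable {E : Type*} [NormedAddCommGroup E] [NormedSpace ℝ E] {S Ω : Set E}

lemma exists_dilation_seq_mapsTo (hΩ : IsOpen Ω) (hcvx : Convex ℝ Ω) (hne : Ω.Nonempty) :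
    ∃ (a : ℕ → E) (t : ℕ → ℝ), Tendsto a atTop (𝓝 0) ∧ Tendsto t atTop (𝓝 1) ∧
      (∀ n, t n ∈ Ioo (0 : ℝ) 1) ∧ ∀ n, MapsTo (fun x => a n + t n • x) (closure Ω) Ω := by
  obtain ⟨x₀, hx₀⟩ := hne
  obtain ⟨t, -, ht_mem, ht⟩ := exists_seq_strictMono_tendsto' (zero_lt_one' ℝ)
  refine ⟨fun n => (1 - t n) • x₀, t, ?_, ht, ht_mem, fun n x hx => ?_⟩
  · simpa using (ht.const_sub 1).smul_const x₀
  · rw [← hΩ.interior_eq] at hx₀ ⊢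
    exact hcvx.combo_interior_closure_mem_interior hx₀ hx (sub_pos.2 (ht_mem n).2)
      (ht_mem n).1.le (sub_add_cancel _ _)

variable [FiniteDimensional ℝ E] [MeasurableSpace E] [BorelSpace E] {μ : Measure E}
  [μ.IsAddHaarMeasure]

lemma setIntegral_comp_add_smul_le (hS : MeasurableSet S) (hΩ : MeasurableSet Ω) {a : E} {t : ℝ}
    (ht : 0 < t) (hmap : MapsTo (fun x => a + t • x) S Ω) {f : E → ℝ} (hf : IntegrableOn f Ω μ)
    (hf_nonneg : ∀ x, 0 ≤ f x) :
    IntegrableOn (fun x => f (a + t • x)) S μ ∧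
      ∫ x in S, f (a + t • x) ∂μ ≤ (t ^ Module.finrank ℝ E)⁻¹ * ∫ x in Ω, f x ∂μ := by
  have hint : Integrable (fun x => Ω.indicator f (a + t • x)) μ :=
    (((integrable_indicator_iff hΩ).2 hf).comp_add_left a).comp_smul ht.ne'
  have hval : ∫ x, Ω.indicator f (a + t • x) ∂μ =
      (t ^ Module.finrank ℝ E)⁻¹ * ∫ x in Ω, f x ∂μ := by
    rw [Measure.integral_comp_smul μ (fun x => Ω.indicator f (a + x)) t,
      integral_add_left_eq_self (Ω.indicator f) a, integral_indicator hΩ, smul_eq_mul,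
      abs_of_pos (by positivity)]
  have heq : EqOn (fun x => Ω.indicator f (a + t • x)) (fun x => f (a + t • x)) S :=
    fun x hx => indicator_of_mem (hmap hx) f
  refine ⟨hint.integrableOn.congr_fun heq hS, ?_⟩
  rw [← setIntegral_congr_fun hS heq, ← hval]
  exact setIntegral_le_integral hint
    (.of_forall fun x => indicator_nonneg (fun x _ => hf_nonneg x) _)

lemma memLp_two_dilation_and_tendsto (hΩ : IsOpen Ω) {a : ℕ → E} {t c : ℕ → ℝ}
    (ht_pos : ∀ n, 0 < t n) (ht : Tendsto t atTop (𝓝 1)) (ha : Tendsto a atTop (𝓝 0))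
    (hc_le : ∀ n, |c n| ≤ 1) (hc : Tendsto c atTop (𝓝 1))
    (hmap : ∀ n, MapsTo (fun x => a n + t n • x) Ω Ω) {g : E → ℝ} (hg : ContinuousOn g Ω)
    (hg2 : MemLp g 2 (μ.restrict Ω)) :
    (∀ n, MemLp (fun x => c n * g (a n + t n • x)) 2 (μ.restrict Ω)) ∧
      Tendsto (fun n => ∫ x in Ω, (c n * g (a n + t n • x) - g x) ^ 2 ∂μ) atTop (𝓝 0) := by
  have hΩm := hΩ.measurableSet
  have hscale (n) := setIntegral_comp_add_smul_le hΩm hΩm (ht_pos n) (hmap n) hg2.integrable_sq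
    fun x => sq_nonneg (g x)
  have hmem (n) : MemLp (fun x => c n * g (a n + t n • x)) 2 (μ.restrict Ω) :=
    have hcont : ContinuousOn (fun x => g (a n + t n • x)) Ω := hg.comp (by fun_prop) (hmap n)
    ((memLp_two_iff_integrable_sq (hcont.aestronglyMeasurable hΩm)).2 (hscale n).1).const_mul _
  refine ⟨hmem, tendsto_integral_sq_sub_of_ae_of_integral_le hmem hg2 ?_
    (b := fun n => (t n ^ Module.finrank ℝ E)⁻¹ * ∫ x in Ω, g x ^ 2 ∂μ) ?_ fun n => ?_⟩
  · filter_upwards [ae_restrict_mem hΩm] with x hx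
    have hpoint : Tendsto (fun n => a n + t n • x) atTop (𝓝 x) := by
      simpa using ha.add (ht.smul_const x)
    simpa using hc.mul ((hg.continuousAt (hΩ.mem_nhds hx)).tendsto.comp hpoint)
  · simpa using ((ht.pow (Module.finrank ℝ E)).inv₀ (by simp)).mul_const (∫ x in Ω, g x ^ 2 ∂μ)
  · refine (integral_mono (hmem n).integrable_sq (hscale n).1 fun x => ?_).trans (hscale n).2
    simp only [mul_pow]
    exact mul_le_of_le_one_left (sq_nonneg _) ((sq_le_one_iff_abs_le_one _).2 (hc_le n))

variable {ι : Type*} [Fintype ι] {e : ι → E} {φ : E → ℝ}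

-- A dilation of `φ` towards a point of `Ω` is smooth near the closure of `Ω`.
lemma exists_isTestFunction_setIntegral_h1Inner_sub_le (hΩ : IsOpen Ω) (hcvx : Convex ℝ Ω)
    (hbdd : Bornology.IsBounded Ω) (hφ : ContDiffOn ℝ ∞ φ Ω)
    (hφ_mem : MemH1 e φ (μ.restrict Ω)) {ε : ℝ} (hε : 0 < ε) :
    ∃ v, IsTestFunction v ∧
      ∫ p in Ω, h1Inner e (fun q => φ q - v q) (fun q => φ q - v q) p ∂μ ≤ ε := by
  rcases Ω.eq_empty_or_nonempty with rfl | hne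
  · exact ⟨fun _ => 0, ⟨contDiff_const, .zero⟩, by simpa using hε.le⟩
  obtain ⟨a, t, ha, ht, ht_mem, hmap⟩ := exists_dilation_seq_mapsTo hΩ hcvx hne
  have hmap' (n) : MapsTo (fun x => a n + t n • x) Ω Ω := (hmap n).mono_left subset_closure
  obtain ⟨hmem, hlim⟩ := memLp_two_dilation_and_tendsto hΩ (fun n => (ht_mem n).1) ht ha
    (c := fun _ => 1) (by simp) tendsto_const_nhds hmap' hφ.continuousOn hφ_mem.memLp
  have hderiv (i) := memLp_two_dilation_and_tendsto hΩ (fun n => (ht_mem n).1) ht ha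
    (fun n => abs_le.2 ⟨by linarith [(ht_mem n).1], (ht_mem n).2.le⟩) ht hmap'
    (contDiffOn_dirDeriv (v := e i) hΩ hφ).continuousOn (hφ_mem.memLp_dirDeriv i)
  have hsum := (tendsto_finsetSum Finset.univ fun i _ => (hderiv i).2).add hlim
  simp only [Finset.sum_const_zero, add_zero] at hsum
  obtain ⟨n, hn⟩ := (hsum.eventually (gt_mem_nhds hε)).exists
  obtain ⟨ψ, hψ, hψ_eq⟩ := exists_isTestFunction_eventuallyEq
    (hbdd.isCompact_closure.image (f := fun x => a n + t n • x) (by fun_prop)) hΩ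
    (hmap n).image_subset hφ
  refine ⟨_, hψ.comp_add_smul (a n) (ht_mem n).1.ne', (le_of_eq ?_).trans hn.le⟩
  have hint : IntegrableOn (fun x => (1 * φ (a n + t n • x) - φ x) ^ 2) Ω μ :=
    ((hmem n).sub hφ_mem.memLp).integrable_sq
  have hdint (i) : IntegrableOn
      (fun x => (t n * dirDeriv (e i) φ (a n + t n • x) - dirDeriv (e i) φ x) ^ 2) Ω μ :=
    (((hderiv i).1 n).sub (hφ_mem.memLp_dirDeriv i)).integrable_sq
  rw [← integral_finsetSum _ fun i _ => hdint i,
    ← integral_add (integrable_finsetSum _ fun i _ => hdint i) hint]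
  refine setIntegral_congr_fun hΩ.measurableSet fun x hx => ?_
  have heq := hψ_eq _ (mem_image_of_mem _ (subset_closure hx))
  have hφx : DifferentiableAt ℝ φ x :=
    (hφ.contDiffAt (hΩ.mem_nhds hx)).differentiableAt (by simp)
  simp only [h1Inner, gradInner]
  congr 1
  · refine Finset.sum_congr rfl fun i _ => ?_
    rw [dirDeriv_sub hφx ((hψ.comp_add_smul (a n) (ht_mem n).1.ne').differentiable x),
      dirDeriv_comp_add_smul _ _ (hψ.differentiable _), dirDeriv_congr heq]
    ring
  · rw [heq.eq_of_nhds]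
    ring

end Dilation

/-! ### Approximation of weak Neumann solutions -/

section Young

variable {E : Type*} [NormedAddCommGroup E] [NormedSpace ℝ E] {ι : Type*} [Fintype ι]
  {e : ι → E} {u v w : E → ℝ} {p : E}

lemma h1Inner_sub_left (hu : DifferentiableAt ℝ u p) (hv : DifferentiableAt ℝ v p) :
    h1Inner e (fun q => u q - v q) w p = h1Inner e u w p - h1Inner e v w p := by
  simp only [h1Inner, gradInner, dirDeriv_sub hu hv, sub_mul, Finset.sum_sub_distrib]
  ring

lemma abs_h1Inner_le : |h1Inner e u w p| ≤ h1Inner e u u p + h1Inner e w w p / 4 := by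
  have young (a b : ℝ) : |a * b| ≤ a * a + b * b / 4 := by
    rw [abs_le]
    constructor <;> nlinarith [sq_nonneg (a - b / 2), sq_nonneg (a + b / 2)]
  have hsum := (Finset.abs_sum_le_sum_abs _ _).trans
    (Finset.sum_le_sum fun i (_ : i ∈ Finset.univ) =>
      young (dirDeriv (e i) u p) (dirDeriv (e i) w p))
  rw [Finset.sum_add_distrib, ← Finset.sum_div] at hsum
  simp only [h1Inner, gradInner]
  linarith [abs_add_le (∑ i, dirDeriv (e i) u p * dirDeriv (e i) w p) (u p * w p),
    young (u p) (w p)]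

end Young

section YoungIntegral

variable {α : Type*} [MeasurableSpace α] {μ : Measure α}

lemma integral_sq_add_le {f g : α → ℝ} (hf : MemLp f 2 μ) (hg : MemLp g 2 μ) :
    ∫ x, (f x + g x) ^ 2 ∂μ ≤ 2 * ∫ x, f x ^ 2 ∂μ + 2 * ∫ x, g x ^ 2 ∂μ := by
  rw [← integral_const_mul, ← integral_const_mul,
    ← integral_add (hf.integrable_sq.const_mul 2) (hg.integrable_sq.const_mul 2)]
  refine integral_mono (hf.add hg).integrable_sq
    ((hf.integrable_sq.const_mul 2).add (hg.integrable_sq.const_mul 2)) fun x => ?_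
  dsimp only [Pi.add_apply]
  nlinarith [sq_nonneg (f x - g x)]

lemma integral_mul_le {f g : α → ℝ} (hf : MemLp f 2 μ) (hg : MemLp g 2 μ) {s : ℝ} (hs : 0 < s) :
    ∫ x, f x * g x ∂μ ≤ s * ∫ x, f x ^ 2 ∂μ + (4 * s)⁻¹ * ∫ x, g x ^ 2 ∂μ := by
  rw [← integral_const_mul, ← integral_const_mul,
    ← integral_add (hf.integrable_sq.const_mul s) (hg.integrable_sq.const_mul _)]
  refine integral_mono (hf.integrable_mul hg)
    ((hf.integrable_sq.const_mul s).add (hg.integrable_sq.const_mul _)) fun x => ?_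
  have hsq : s * f x ^ 2 + (4 * s)⁻¹ * g x ^ 2 - f x * g x = s * (f x - (2 * s)⁻¹ * g x) ^ 2 := by
    field_simp
    ring
  linarith [mul_nonneg hs.le (sq_nonneg (f x - (2 * s)⁻¹ * g x))]

variable {E : Type*} [NormedAddCommGroup E] [NormedSpace ℝ E] [MeasurableSpace E]
  {ν : Measure E} {ι : Type*} [Fintype ι] {e : ι → E} {u v w ρ : E → ℝ}

lemma abs_integral_h1Inner_mul_le (hρ : ∀ p, 0 ≤ ρ p)
    (hu : Integrable (fun p => h1Inner e u u p * ρ p) ν)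
    (hw : Integrable (fun p => h1Inner e w w p * ρ p) ν) :
    |∫ p, h1Inner e u w p * ρ p ∂ν| ≤
      ∫ p, h1Inner e u u p * ρ p ∂ν + (∫ p, h1Inner e w w p * ρ p ∂ν) / 4 := by
  rw [← integral_div, ← integral_add hu (hw.div_const 4)]
  refine abs_integral_le_integral_abs.trans
    (integral_mono_of_nonneg (.of_forall fun p => abs_nonneg _) (hu.add (hw.div_const 4))
      (.of_forall fun p => ?_))
  dsimp only [Pi.add_apply]
  rw [abs_mul, abs_of_nonneg (hρ p)]
  linarith [mul_le_mul_of_nonneg_right (abs_h1Inner_le (e := e) (u := u) (w := w) (p := p)) (hρ p)]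

lemma MemH1.integral_h1Inner_sub_le (hu : MemH1 e u ν) (hv : MemH1 e v ν) (hw : MemH1 e w ν)
    (hu_diff : ∀ᵐ p ∂ν, DifferentiableAt ℝ u p) (hv_diff : ∀ᵐ p ∂ν, DifferentiableAt ℝ v p) :
    ∫ p, h1Inner e u w p ∂ν - ∫ p, h1Inner e v w p ∂ν ≤
      ∫ p, h1Inner e (fun q => u q - v q) (fun q => u q - v q) p ∂ν +
        (∫ p, h1Inner e w w p ∂ν) / 4 := by
  have huv := hu.sub hv hu_diff hv_diff
  have hsub : ∫ p, h1Inner e u w p ∂ν - ∫ p, h1Inner e v w p ∂ν =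
      ∫ p, h1Inner e (fun q => u q - v q) w p ∂ν := by
    rw [← integral_sub (hu.integrable_h1Inner hw) (hv.integrable_h1Inner hw)]
    refine integral_congr_ae ?_
    filter_upwards [hu_diff, hv_diff] with p hup hvp
    rw [h1Inner_sub_left hup hvp]
  rw [hsub]
  simpa using (le_abs_self _).trans (abs_integral_h1Inner_mul_le (ρ := fun _ => 1)
    (fun _ => zero_le_one) (by simpa using huv.integrable_h1Inner huv)
    (by simpa using hw.integrable_h1Inner hw))

variable [BorelSpace E] [IsFiniteMeasureOnCompacts ν] {V : E → ℝ}

lemma integral_mul_exp_mul_le {r : E → ℝ} (hV : ContDiff ℝ ∞ V) (hw : IsTestFunction w)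
    (hr : MemLp r 2 ν) :
    ∫ p, w p * Real.exp (-V p / 2) * r p ∂ν ≤
      (∫ p, h1Inner e w w p * Real.exp (-V p) ∂ν) / 4 + ∫ p, r p ^ 2 ∂ν := by
  have henergy : Integrable (fun p => h1Inner e w w p * Real.exp (-V p)) ν :=
    ((hw.h1Inner_right hw.contDiff).mul_right hV.neg.exp).integrable
  rw [← integral_div, ← integral_add (henergy.div_const 4) hr.integrable_sq]
  refine integral_mono ((hw.mul_right (hV.neg.div_const 2).exp).memLp_two.integrable_mul hr)
    ((henergy.div_const 4).add hr.integrable_sq) fun p => ?_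
  have hexp : Real.exp (-V p) = Real.exp (-V p / 2) * Real.exp (-V p / 2) := by
    rw [← Real.exp_add, add_halves]
  have hle := mul_le_mul_of_nonneg_right (sq_le_h1Inner_self (e := e) (u := w) (p := p))
    (Real.exp_pos (-V p)).le
  dsimp only [Pi.add_apply]
  rw [hexp] at hle ⊢
  nlinarith [sq_nonneg (w p * Real.exp (-V p / 2) / 2 - r p)]

end YoungIntegral

section Penalty

variable {E : Type*} [NormedAddCommGroup E] [NormedSpace ℝ E] [MeasurableSpace E] {μ : Measure E}
  {Ω : Set E} {V f : E → ℝ}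

lemma IsConvexPenalty.setIntegral_mul_exp_eq (hV : IsConvexPenalty (closure Ω) V)
    (hΩ : MeasurableSet Ω) (f : E → ℝ) :
    ∫ p in Ω, f p * Real.exp (-V p) ∂μ = ∫ p in Ω, f p ∂μ :=
  setIntegral_congr_fun hΩ fun p hp => by simp [hV.eq_zero p (subset_closure hp)]

lemma IsConvexPenalty.setIntegral_le_integral_mul_exp (hV : IsConvexPenalty (closure Ω) V)
    (hΩ : MeasurableSet Ω) (hf : ∀ p, 0 ≤ f p)
    (hfV : Integrable (fun p => f p * Real.exp (-V p)) μ) :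
    ∫ p in Ω, f p ∂μ ≤ ∫ p, f p * Real.exp (-V p) ∂μ := by
  rw [← hV.setIntegral_mul_exp_eq hΩ]
  exact setIntegral_le_integral hfV (.of_forall fun p => mul_nonneg (hf p) (Real.exp_pos _).le)

end Penalty

section Neumann

variable {E : Type*} [NormedAddCommGroup E] [NormedSpace ℝ E] [MeasurableSpace E]
  {ι : Type*} [Fintype ι] {e : ι → E} {μ : Measure E} {Ω : Set E} {φ g V u v w : E → ℝ}

/-- Weak formulation of the Neumann problem `φ - Δφ = g` on `Ω`, tested with compactly supported
smooth functions on the whole space. -/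
def IsWeakNeumannSolution (e : ι → E) (μ : Measure E) (Ω : Set E) (g φ : E → ℝ) : Prop :=
  ∀ w, IsTestFunction w → ∫ p in Ω, h1Inner e φ w p ∂μ = ∫ p in Ω, g p * w p ∂μ

/-- `φ` is a limit in `L²(Ω)` of test functions whose squared `H²(Ω)` norm is at most `M`. -/
def IsBoundedH2Limit (e : ι → E) (μ : Measure E) (Ω : Set E) (M : ℝ) (φ : E → ℝ) : Prop :=
  ∀ ε > 0, ∃ u, IsTestFunction u ∧ ∫ p in Ω, (φ p - u p) ^ 2 ∂μ ≤ ε ∧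
    ∫ p in Ω, h2Sq e u p ∂μ ≤ M

variable [BorelSpace E]

lemma ae_restrict_differentiableAt (hΩ : IsOpen Ω) (hφ : DifferentiableOn ℝ φ Ω) :
    ∀ᵐ p ∂μ.restrict Ω, DifferentiableAt ℝ φ p := by
  filter_upwards [ae_restrict_mem hΩ.measurableSet] with p hp
  exact hφ.differentiableAt (hΩ.mem_nhds hp)

variable [FiniteDimensional ℝ E] [μ.IsAddHaarMeasure]

lemma IsConvexPenalty.integral_h1Inner_mul_exp_eq (hV : IsConvexPenalty (closure Ω) V)
    (hφ : IsWeakNeumannSolution e μ Ω g φ) (hΩ : IsOpen Ω) (hg : MemLp g 2 (μ.restrict Ω))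
    (hu : IsTestFunction u) (hw : IsTestFunction w) :
    ∫ p, h1Inner e u w p * Real.exp (-V p) ∂μ =
      ∫ p, w p * Real.exp (-V p / 2) *
        (Real.exp (-V p / 2) * driftOp e V u p - Ω.indicator g p) ∂μ +
        ∫ p in Ω, h1Inner e φ w p ∂μ := by
  have hhalf : ContDiff ℝ ∞ fun p => Real.exp (-V p / 2) := (hV.contDiff.neg.div_const 2).exp
  have hexp (p) : Real.exp (-V p) = Real.exp (-V p / 2) * Real.exp (-V p / 2) := by
    rw [← Real.exp_add, add_halves]
  have hgΩ : MemLp (Ω.indicator g) 2 μ := (memLp_indicator_iff_restrict hΩ.measurableSet).2 hg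
  have hwhalf := hw.mul_right hhalf
  have hint : Integrable (fun p => w p * Real.exp (-V p / 2) * Ω.indicator g p) μ :=
    hwhalf.memLp_two.integrable_mul hgΩ
  have hres : Integrable (fun p => w p * Real.exp (-V p / 2) *
      (Real.exp (-V p / 2) * driftOp e V u p - Ω.indicator g p)) μ :=
    hwhalf.memLp_two.integrable_mul
      (((hu.driftOp hV.contDiff).mul_left hhalf).memLp_two.sub hgΩ)
  have hload : ∫ p, w p * Real.exp (-V p / 2) * Ω.indicator g p ∂μ =
      ∫ p in Ω, h1Inner e φ w p ∂μ := by
    rw [hφ w hw, ← integral_indicator hΩ.measurableSet]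
    refine integral_congr_ae (.of_forall fun p => ?_)
    by_cases hp : p ∈ Ω
    · simp [hp, hV.eq_zero p (subset_closure hp), mul_comm]
    · simp [hp]
  rw [← integral_mul_driftOp_mul_exp hV.contDiff hu.contDiff hw, ← hload, ← integral_add hres hint]
  refine integral_congr_ae (.of_forall fun p => ?_)
  simp only [hexp p]
  ring

-- Young's inequality absorbs half of the energy of `w = u - v` in each of the three error terms.
lemma IsConvexPenalty.integral_h1Inner_sub_mul_exp_le (hV : IsConvexPenalty (closure Ω) V)
    (hφ : IsWeakNeumannSolution e μ Ω g φ) (hφ_mem : MemH1 e φ (μ.restrict Ω))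
    (hφ_diff : DifferentiableOn ℝ φ Ω) (hΩ : IsOpen Ω) (hg : MemLp g 2 (μ.restrict Ω))
    (hu : IsTestFunction u) (hv : IsTestFunction v) :
    ∫ p, h1Inner e (fun q => u q - v q) (fun q => u q - v q) p * Real.exp (-V p) ∂μ ≤
      2 * (∫ p in Ω, h1Inner e (fun q => φ q - v q) (fun q => φ q - v q) p ∂μ +
        ∫ p in Ωᶜ, h1Inner e v v p * Real.exp (-V p) ∂μ +
        ∫ p, (Real.exp (-V p / 2) * driftOp e V u p - Ω.indicator g p) ^ 2 ∂μ) := by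
  have hw := hu.sub hv
  set w : E → ℝ := fun q => u q - v q
  have hint {f₁ f₂ : E → ℝ} (hf₁ : IsTestFunction f₁) (hf₂ : IsTestFunction f₂) :
      Integrable (fun p => h1Inner e f₁ f₂ p * Real.exp (-V p)) μ :=
    ((hf₂.h1Inner_right hf₁.contDiff).mul_right hV.contDiff.neg.exp).integrable
  have hsub : ∫ p, h1Inner e w w p * Real.exp (-V p) ∂μ =
      ∫ p, h1Inner e u w p * Real.exp (-V p) ∂μ - ∫ p, h1Inner e v w p * Real.exp (-V p) ∂μ := by
    rw [← integral_sub (hint hu hw) (hint hv hw)]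
    refine integral_congr_ae (.of_forall fun p => ?_)
    dsimp only
    rw [← sub_mul, ← h1Inner_sub_left (hu.differentiable p) (hv.differentiable p)]
  have hsplit {f : E → ℝ} (hf : IsTestFunction f) :
      ∫ p, h1Inner e f w p * Real.exp (-V p) ∂μ = ∫ p in Ω, h1Inner e f w p ∂μ +
        ∫ p in Ωᶜ, h1Inner e f w p * Real.exp (-V p) ∂μ := by
    rw [← hV.setIntegral_mul_exp_eq hΩ.measurableSet,
      integral_add_compl hΩ.measurableSet (hint hf hw)]
  have hinner := hφ_mem.integral_h1Inner_sub_le hv.memH1 hw.memH1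
    (ae_restrict_differentiableAt hΩ hφ_diff)
    (.of_forall hv.differentiable)
  have houter := (neg_le_abs _).trans (abs_integral_h1Inner_mul_le (ν := μ.restrict Ωᶜ)
    (fun p => (Real.exp_pos (-V p)).le) (hint hv hv).integrableOn (hint hw hw).integrableOn)
  have hres := integral_mul_exp_mul_le (e := e) hV.contDiff hw
    (((hu.driftOp hV.contDiff (e := e)).mul_left (hV.contDiff.neg.div_const 2).exp).memLp_two.sub
      ((memLp_indicator_iff_restrict hΩ.measurableSet).2 hg))
  dsimp only [Pi.sub_apply] at hres
  linarith [hV.integral_h1Inner_mul_exp_eq hφ hΩ hg hu hw, hsplit hv, hsplit hw]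

lemma IsConvexPenalty.tendsto_setIntegral_compl_mul_exp {V : ℕ → E → ℝ} {f : E → ℝ}
    (hV : ∀ n, IsConvexPenalty (closure Ω) (V n))
    (hV_lim : ∀ x ∉ closure Ω, Tendsto (fun n => V n x) atTop atTop)
    (hΩ : Convex ℝ Ω) (hf : Integrable f μ) :
    Tendsto (fun n => ∫ p in Ωᶜ, f p * Real.exp (-V n p) ∂μ) atTop (𝓝 0) := by
  rw [← integral_zero E ℝ (μ := μ.restrict Ωᶜ)]
  refine tendsto_integral_of_dominated_convergence (fun p => |f p|) (fun n => ?_)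
    hf.abs.integrableOn (fun n => .of_forall fun p => ?_) ?_
  · exact hf.1.restrict.mul (hV n).contDiff.neg.exp.continuous.aestronglyMeasurable
  · rw [Real.norm_eq_abs, abs_mul, Real.abs_exp]
    exact mul_le_of_le_one_right (abs_nonneg _)
      (Real.exp_le_one_iff.2 (neg_nonpos.2 ((hV n).nonneg p)))
  · filter_upwards [ae_restrict_mem₀ (hΩ.nullMeasurableSet μ).compl,
      ae_restrict_of_ae (measure_eq_zero_iff_ae_notMem.1 (hΩ.addHaar_frontier μ))]
      with x hx hx_frontier
    have hx_closure : x ∉ closure Ω := fun h => hx_frontier ⟨h, fun hi => hx (interior_subset hi)⟩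
    simpa using (Real.tendsto_exp_neg_atTop_nhds_zero.comp (hV_lim x hx_closure)).const_mul (f x)

lemma IsConvexPenalty.setIntegral_h2Sq_le (hV : IsConvexPenalty (closure Ω) V) (hΩ : IsOpen Ω)
    (hg : MemLp g 2 (μ.restrict Ω)) (hu : IsTestFunction u) :
    ∫ p in Ω, h2Sq e u p ∂μ ≤
      2 * ∫ p, (Real.exp (-V p / 2) * driftOp e V u p - Ω.indicator g p) ^ 2 ∂μ +
        2 * ∫ p in Ω, g p ^ 2 ∂μ := by
  have hgΩ : MemLp (Ω.indicator g) 2 μ := (memLp_indicator_iff_restrict hΩ.measurableSet).2 hg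
  have hdrift : MemLp (fun p => Real.exp (-V p / 2) * driftOp e V u p) 2 μ :=
    ((hu.driftOp hV.contDiff).mul_left (hV.contDiff.neg.div_const 2).exp).memLp_two
  have hexp (p) : driftOp e V u p ^ 2 * Real.exp (-V p) =
      (Real.exp (-V p / 2) * driftOp e V u p) ^ 2 := by
    rw [mul_pow, ← Real.exp_nat_mul, mul_comm]
    congr 2
    push_cast
    ring
  calc ∫ p in Ω, h2Sq e u p ∂μ
    _ ≤ ∫ p, h2Sq e u p * Real.exp (-V p) ∂μ :=
      hV.setIntegral_le_integral_mul_exp hΩ.measurableSet (fun p => h2Sq_nonneg)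
        (hu.h2Sq.mul_right hV.contDiff.neg.exp).integrable
    _ ≤ ∫ p, driftOp e V u p ^ 2 * Real.exp (-V p) ∂μ :=
      integral_h2Sq_mul_exp_le hV.contDiff hV.convexOn hu
    _ = ∫ p, ((Real.exp (-V p / 2) * driftOp e V u p - Ω.indicator g p) +
        Ω.indicator g p) ^ 2 ∂μ := by simp only [hexp, sub_add_cancel]
    _ ≤ _ := integral_sq_add_le (hdrift.sub hgΩ) hgΩ
    _ = _ := by
      rw [← integral_indicator hΩ.measurableSet (f := fun p => g p ^ 2)]
      congr 3 with p
      by_cases hp : p ∈ Ω <;> simp [hp]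

theorem IsWeakNeumannSolution.isBoundedH2Limit
    (hφ : IsWeakNeumannSolution e μ Ω g φ) (hφ_mem : MemH1 e φ (μ.restrict Ω))
    (hφ_smooth : ContDiffOn ℝ ∞ φ Ω) (hg : MemLp g 2 (μ.restrict Ω)) (hΩ : IsOpen Ω)
    (hcvx : Convex ℝ Ω) (hbdd : Bornology.IsBounded Ω) :
    IsBoundedH2Limit e μ Ω (2 + 2 * ∫ p in Ω, g p ^ 2 ∂μ) φ := by
  intro ε hε
  obtain ⟨V, hV, hV_lim⟩ :=
    exists_seq_isConvexPenalty_tendsto_atTop hcvx.closure (isClosed_closure (s := Ω))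
  obtain ⟨v, hv, hφv⟩ := exists_isTestFunction_setIntegral_h1Inner_sub_le hΩ hcvx hbdd hφ_smooth
    hφ_mem (ε := ε / 16) (by positivity)
  obtain ⟨n, hn⟩ := ((IsConvexPenalty.tendsto_setIntegral_compl_mul_exp hV hV_lim hcvx
    ((hv.h1Inner_right (e := e) hv.contDiff).integrable (μ := μ))).eventually
    (gt_mem_nhds (show 0 < ε / 16 by positivity))).exists
  obtain ⟨u, hu, hres⟩ := exists_integral_sq_exp_mul_driftOp_sub_le e (hV n).contDiff
    ((memLp_indicator_iff_restrict hΩ.measurableSet).2 hg) (ε := min 1 (ε / 16)) (by positivity)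
  obtain ⟨hres_one, hres_ε⟩ := le_min_iff.1 hres
  have hdiff : DifferentiableOn ℝ φ Ω := hφ_smooth.differentiableOn (by simp)
  refine ⟨u, hu, ?_, by linarith [(hV n).setIntegral_h2Sq_le (e := e) hΩ hg hu]⟩
  have hφv_memH1 := hφ_mem.sub (hv.memH1 (ν := μ.restrict Ω))
    (ae_restrict_differentiableAt hΩ hdiff) (.of_forall hv.differentiable)
  have hφv_sq : ∫ p in Ω, (φ p - v p) ^ 2 ∂μ ≤ ε / 16 :=
    (integral_mono hφv_memH1.memLp.integrable_sq (hφv_memH1.integrable_h1Inner hφv_memH1)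
      fun p => sq_le_h1Inner_self (u := fun q => φ q - v q)).trans hφv
  have huv_sq : ∫ p in Ω, (u p - v p) ^ 2 ∂μ ≤ 6 * ε / 16 := by
    have huv := hu.sub hv
    have hmul_exp {f : E → ℝ} (hf : IsTestFunction f) : Integrable
        (fun p => f p * Real.exp (-V n p)) μ := (hf.mul_right (hV n).contDiff.neg.exp).integrable
    calc ∫ p in Ω, (u p - v p) ^ 2 ∂μ
      _ ≤ ∫ p, (u p - v p) ^ 2 * Real.exp (-V n p) ∂μ :=
        (hV n).setIntegral_le_integral_mul_exp hΩ.measurableSet (fun p => sq_nonneg _)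
          (hmul_exp huv.sq)
      _ ≤ _ := integral_mono (hmul_exp huv.sq) (hmul_exp (huv.h1Inner_right (e := e) huv.contDiff))
        fun p => mul_le_mul_of_nonneg_right (sq_le_h1Inner_self (u := fun q => u q - v q))
          (Real.exp_pos _).le
      _ ≤ _ := (hV n).integral_h1Inner_sub_mul_exp_le hφ hφ_mem hdiff hΩ hg hu hv
      _ ≤ 6 * ε / 16 := by linarith
  calc ∫ p in Ω, (φ p - u p) ^ 2 ∂μ
    _ = ∫ p in Ω, ((φ p - v p) + (v p - u p)) ^ 2 ∂μ := by simp only [sub_add_sub_cancel]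
    _ ≤ _ := integral_sq_add_le hφv_memH1.memLp (hv.memLp_two.sub hu.memLp_two)
    _ ≤ ε := by
      simp only [sub_sq_comm (v _)]
      linarith

end Neumann

/-! ### Square integrability of second derivatives -/

section SecondDerivatives

lemma setIntegral_mul_eq_of_tsupport_subset {α : Type*} [TopologicalSpace α] [MeasurableSpace α]
    {μ : Measure α} {Ω : Set α} {ζ : α → ℝ} (hζ : tsupport ζ ⊆ Ω) (f : α → ℝ) :
    ∫ p in Ω, ζ p * f p ∂μ = ∫ p, ζ p * f p ∂μ :=
  setIntegral_eq_integral_of_forall_compl_eq_zero fun p hp => by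
    rw [image_eq_zero_of_notMem_tsupport (fun h => hp (hζ h)), zero_mul]

variable {E : Type*} [NormedAddCommGroup E] [NormedSpace ℝ E] [FiniteDimensional ℝ E]
  [MeasurableSpace E] [BorelSpace E] {μ : Measure E} {Ω : Set E}

lemma integrableOn_of_forall_isCompact_setIntegral_le (hΩ : IsOpen Ω) {f : E → ℝ} {M : ℝ}
    (hf : ∀ x, 0 ≤ f x)
    (hM : ∀ K, IsCompact K → K ⊆ Ω → IntegrableOn f K μ ∧ ∫ x in K, f x ∂μ ≤ M) :
    IntegrableOn f Ω μ := by
  obtain ⟨F, hF_closed, hF_sub, hF_union, hF_mono⟩ := hΩ.exists_iUnion_isClosed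
  let K (n : ℕ) : Set E := F n ∩ Metric.closedBall 0 n
  have hK (n) : IsCompact (K n) := (isCompact_closedBall 0 (n : ℝ)).inter_left (hF_closed n)
  have hKΩ (n) : K n ⊆ Ω := inter_subset_left.trans (hF_sub n)
  have hcover : AECover (μ.restrict Ω) atTop K := by
    refine ⟨?_, fun n => (hK n).measurableSet⟩
    filter_upwards [ae_restrict_mem hΩ.measurableSet] with x hx
    obtain ⟨m, hm⟩ := mem_iUnion.1 (hF_union.symm ▸ hx)
    filter_upwards [eventually_ge_atTop m, eventually_ge_atTop ⌈‖x‖⌉₊] with n hmn hxn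
    exact ⟨hF_mono hmn hm, mem_closedBall_zero_iff.2 (Nat.ceil_le.1 hxn)⟩
  refine hcover.integrable_of_integral_bounded_of_nonneg_ae M (fun n => ?_) (.of_forall hf)
    (.of_forall fun n => ?_)
  · rw [IntegrableOn, Measure.restrict_restrict_of_subset (hKΩ n)]
    exact (hM _ (hK n) (hKΩ n)).1
  · rw [Measure.restrict_restrict_of_subset (hKΩ n)]
    exact (hM _ (hK n) (hKΩ n)).2

variable [μ.IsAddHaarMeasure] {ι : Type*} [Fintype ι] {e : ι → E} {φ u ζ : E → ℝ} {v w : E}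

lemma integral_mul_dirDeriv_dirDeriv (hΩ : IsOpen Ω) (hφ : ContDiffOn ℝ ∞ φ Ω)
    (hζ : IsTestFunction ζ) (hζΩ : tsupport ζ ⊆ Ω) :
    ∫ p, ζ p * dirDeriv v (dirDeriv w φ) p ∂μ = ∫ p, dirDeriv w (dirDeriv v ζ) p * φ p ∂μ := by
  obtain ⟨ψ, hψ, hψ_eq⟩ := exists_isTestFunction_eventuallyEq hζ.hasCompactSupport hΩ hζΩ hφ
  calc ∫ p, ζ p * dirDeriv v (dirDeriv w φ) p ∂μ
    _ = ∫ p, ζ p * dirDeriv v (dirDeriv w ψ) p ∂μ := by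
      refine integral_congr_ae (.of_forall fun p => ?_)
      by_cases hp : p ∈ tsupport ζ
      · simp only [dirDeriv_congr (dirDeriv_eventuallyEq (hψ_eq p hp))]
      · simp [image_eq_zero_of_notMem_tsupport hp]
    _ = ∫ p, dirDeriv w (dirDeriv v ζ) p * ψ p ∂μ := by
      rw [integral_mul_dirDeriv hζ (hψ.dirDeriv w).contDiff,
        integral_mul_dirDeriv (hζ.dirDeriv v) hψ.contDiff, neg_neg]
    _ = _ := by
      refine integral_congr_ae (.of_forall fun p => ?_)
      by_cases hp : p ∈ tsupport ζ
      · simp only [(hψ_eq p hp).eq_of_nhds]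
      · simp [dirDeriv_of_notMem_tsupport (fun h => hp (tsupport_dirDeriv_subset h))]

lemma setIntegral_dirDeriv_dirDeriv_mul_le (hu : IsTestFunction u) (hζ : IsTestFunction ζ)
    (hζΩ : tsupport ζ ⊆ Ω) (i j : ι) :
    ∫ p in Ω, dirDeriv (e j) (dirDeriv (e i) ζ) p * u p ∂μ ≤
      ((∫ p, ζ p ^ 2 ∂μ) + ∫ p in Ω, h2Sq e u p ∂μ) / 2 := by
  have hD := (hu.dirDeriv (e j)).dirDeriv (e i)
  have hD_le : ∫ p in Ω, dirDeriv (e i) (dirDeriv (e j) u) p ^ 2 ∂μ ≤ ∫ p in Ω, h2Sq e u p ∂μ :=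
    integral_mono hD.sq.integrable hu.h2Sq.integrable fun p => sq_dirDeriv_dirDeriv_le_h2Sq i j
  have hζ_le : ∫ p in Ω, ζ p ^ 2 ∂μ ≤ ∫ p, ζ p ^ 2 ∂μ :=
    setIntegral_le_integral hζ.sq.integrable (.of_forall fun p => sq_nonneg _)
  rw [setIntegral_mul_eq_of_tsupport_subset
      ((tsupport_dirDeriv_subset.trans tsupport_dirDeriv_subset).trans hζΩ),
    ← integral_mul_dirDeriv_dirDeriv isOpen_univ hu.contDiff.contDiffOn hζ (subset_univ _),
    ← setIntegral_mul_eq_of_tsupport_subset hζΩ]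
  linarith [integral_mul_le (μ := μ.restrict Ω) hζ.memLp_two hD.memLp_two one_half_pos]

lemma IsBoundedH2Limit.integral_mul_dirDeriv_dirDeriv_le {M : ℝ}
    (hφ : IsBoundedH2Limit e μ Ω M φ) (hφ_mem : MemLp φ 2 (μ.restrict Ω))
    (hφ_smooth : ContDiffOn ℝ ∞ φ Ω) (hΩ : IsOpen Ω)
    (hζ : IsTestFunction ζ) (hζΩ : tsupport ζ ⊆ Ω) (i j : ι) :
    ∫ p, ζ p * dirDeriv (e i) (dirDeriv (e j) φ) p ∂μ ≤ ((∫ p, ζ p ^ 2 ∂μ) + M) / 2 := by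
  set η := dirDeriv (e j) (dirDeriv (e i) ζ)
  have hη : IsTestFunction η := (hζ.dirDeriv _).dirDeriv _
  have hηΩ : tsupport η ⊆ Ω :=
    (tsupport_dirDeriv_subset.trans tsupport_dirDeriv_subset).trans hζΩ
  refine le_of_forall_pos_le_add fun ε hε => ?_
  set s := ε / (∫ p in Ω, η p ^ 2 ∂μ + 1)
  have hpos : 0 < ∫ p in Ω, η p ^ 2 ∂μ + 1 :=
    add_pos_of_nonneg_of_pos (integral_nonneg fun p => sq_nonneg _) one_pos
  have hs : 0 < s := div_pos hε hpos
  obtain ⟨u, hu, hφu, hu_le⟩ := hφ (4 * s ^ 2) (by positivity)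
  have hdiff : MemLp (fun p => φ p - u p) 2 (μ.restrict Ω) := hφ_mem.sub hu.memLp_two
  have herror : ∫ p in Ω, η p * (φ p - u p) ∂μ ≤ ε :=
    calc ∫ p in Ω, η p * (φ p - u p) ∂μ
      _ ≤ _ := integral_mul_le hη.memLp_two hdiff hs
      _ ≤ s * ∫ p in Ω, η p ^ 2 ∂μ + (4 * s)⁻¹ * (4 * s ^ 2) := by gcongr
      _ = s * (∫ p in Ω, η p ^ 2 ∂μ + 1) := by field_simp
      _ = ε := div_mul_cancel₀ _ hpos.ne'
  rw [integral_mul_dirDeriv_dirDeriv hΩ hφ_smooth hζ hζΩ,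
    ← setIntegral_mul_eq_of_tsupport_subset hηΩ]
  calc ∫ p in Ω, η p * φ p ∂μ
    _ = ∫ p in Ω, (η p * (φ p - u p) + η p * u p) ∂μ := by simp only [mul_sub, sub_add_cancel]
    _ = ∫ p in Ω, η p * (φ p - u p) ∂μ + ∫ p in Ω, η p * u p ∂μ :=
      integral_add (hη.memLp_two.integrable_mul hdiff) (hη.memLp_two.integrable_mul hu.memLp_two)
    _ ≤ ((∫ p, ζ p ^ 2 ∂μ) + M) / 2 + ε := by
      linarith [setIntegral_dirDeriv_dirDeriv_mul_le (e := e) (μ := μ) hu hζ hζΩ i j]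

-- Duality: test against `χ ∂ᵢ∂ⱼφ` for a cutoff function `χ`.
theorem IsBoundedH2Limit.integrableOn_sq_dirDeriv_dirDeriv {M : ℝ}
    (hφ : IsBoundedH2Limit e μ Ω M φ) (hφ_mem : MemLp φ 2 (μ.restrict Ω))
    (hφ_smooth : ContDiffOn ℝ ∞ φ Ω) (hΩ : IsOpen Ω) (i j : ι) :
    IntegrableOn (fun p => dirDeriv (e i) (dirDeriv (e j) φ) p ^ 2) Ω μ := by
  set D := dirDeriv (e i) (dirDeriv (e j) φ)
  have hD : ContDiffOn ℝ ∞ D Ω := contDiffOn_dirDeriv hΩ (contDiffOn_dirDeriv hΩ hφ_smooth)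
  refine integrableOn_of_forall_isCompact_setIntegral_le hΩ (M := M) (fun p => sq_nonneg _)
    fun K hK hKΩ => ?_
  have hDK : IntegrableOn (fun p => D p ^ 2) K μ :=
    ((hD.continuousOn.mono hKΩ).pow 2).integrableOn_compact hK
  refine ⟨hDK, ?_⟩
  obtain ⟨χ, hχ, hχΩ, hχ_mem, hχ_one⟩ := exists_isTestFunction_cutoff hK hΩ hKΩ
  have hζ : IsTestFunction fun p => χ p * D p := hχ.mul_contDiffOn hχΩ hΩ hD
  have hχD : IsTestFunction fun p => χ p * D p ^ 2 := hχ.mul_contDiffOn hχΩ hΩ (hD.pow 2)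
  have hdual : ∫ p, χ p * D p ^ 2 ∂μ ≤ ((∫ p, (χ p * D p) ^ 2 ∂μ) + M) / 2 := by
    have h := hφ.integral_mul_dirDeriv_dirDeriv_le hφ_mem hφ_smooth hΩ hζ
      (tsupport_mul_subset_left.trans hχΩ) i j
    simpa only [mul_assoc, pow_two] using h
  have hle : ∫ p, (χ p * D p) ^ 2 ∂μ ≤ ∫ p, χ p * D p ^ 2 ∂μ := by
    refine integral_mono hζ.sq.integrable hχD.integrable fun p => ?_
    dsimp only
    rw [mul_pow]
    exact mul_le_mul_of_nonneg_right (pow_le_of_le_one (hχ_mem p).1 (hχ_mem p).2 two_ne_zero)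
      (sq_nonneg _)
  calc ∫ p in K, D p ^ 2 ∂μ
    _ = ∫ p in K, χ p * D p ^ 2 ∂μ :=
      setIntegral_congr_fun hK.measurableSet fun p hp => by simp [hχ_one.self_of_nhdsSet p hp]
    _ ≤ ∫ p, χ p * D p ^ 2 ∂μ := setIntegral_le_integral hχD.integrable
      (.of_forall fun p => mul_nonneg (hχ_mem p).1 (sq_nonneg _))
    _ ≤ M := by linarith

end SecondDerivatives

/-! ### Sobolev embedding in dimension at most two -/

section SobolevEmbedding

lemma abs_le_one_add_sq (a : ℝ) : |a| ≤ 1 + a ^ 2 := by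
  nlinarith [sq_nonneg (|a| - 1), sq_abs a, abs_nonneg a]

section Pointwise

variable {E : Type*} [NormedAddCommGroup E] [NormedSpace ℝ E] {ι : Type*} [Fintype ι]
  {e : ι → E} {u : E → ℝ}

lemma eq_sub_dirDeriv_add_integral (hu : ContDiff ℝ ∞ u) (x y : E) :
    u x = u y - dirDeriv (y - x) u y +
      ∫ t in (0 : ℝ)..1, t * dirDeriv (y - x) (dirDeriv (y - x) u) (x + t • (y - x)) := by
  set v := y - x
  have hderiv (t : ℝ) :
      HasDerivAt (fun s : ℝ => s * dirDeriv v u (x + s • v) - u (x + s • v))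
        (t * dirDeriv v (dirDeriv v u) (x + t • v)) t := by
    refine (((hasDerivAt_id t).mul (hasDerivAt_comp_add_smul x t
      (differentiable_dirDeriv hu _))).sub
      (hasDerivAt_comp_add_smul x t (hu.differentiable (by simp) _))).congr_deriv ?_
    simp
  have hcont : Continuous fun t : ℝ => t * dirDeriv v (dirDeriv v u) (x + t • v) := by
    have := (contDiff_dirDeriv (v := v) (contDiff_dirDeriv (v := v) hu)).continuous
    fun_prop
  rw [intervalIntegral.integral_eq_sub_of_hasDerivAt (fun t _ => hderiv t)
    (hcont.intervalIntegrable _ _)]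
  simp only [v, one_smul, zero_smul, add_sub_cancel, add_zero, one_mul, zero_mul]
  ring

lemma abs_dirDeriv_sum_smul_le (c : ι → ℝ) (p : E) :
    |dirDeriv (∑ i, c i • e i) u p| ≤ ‖c‖ * (Fintype.card ι + gradInner e u u p) :=
  calc |dirDeriv (∑ i, c i • e i) u p|
    _ = |∑ i, c i * dirDeriv (e i) u p| := by rw [dirDeriv_sum_smul]
    _ ≤ ∑ i, |c i| * |dirDeriv (e i) u p| := by
      simpa only [abs_mul] using Finset.abs_sum_le_sum_abs (fun i => c i * dirDeriv (e i) u p) _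
    _ ≤ ∑ i, ‖c‖ * (1 + dirDeriv (e i) u p ^ 2) := by
      gcongr with i
      exacts [norm_le_pi_norm c i, abs_le_one_add_sq _]
    _ = ‖c‖ * (Fintype.card ι + gradInner e u u p) := by
      simp [gradInner, ← Finset.mul_sum, Finset.sum_add_distrib, pow_two]

lemma abs_mul_dirDeriv_dirDeriv_sum_smul_le (hu : ContDiff ℝ ∞ u) (c : ι → ℝ) (t : ℝ) (p : E) :
    |t * dirDeriv (∑ i, c i • e i) (dirDeriv (∑ i, c i • e i) u) p| ≤
      ‖c‖ ^ 2 * (Fintype.card ι ^ 2 + t ^ 2 * hessSq e u p) :=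
  calc |t * dirDeriv (∑ i, c i • e i) (dirDeriv (∑ i, c i • e i) u) p|
    _ = |∑ i, ∑ j, c i * c j * (t * dirDeriv (e i) (dirDeriv (e j) u) p)| := by
      rw [dirDeriv_dirDeriv_sum_smul _ _ _ hu]
      simp only [Finset.mul_sum]
      congr! 3
      ring
    _ ≤ ∑ i, ∑ j, |c i| * |c j| * |t * dirDeriv (e i) (dirDeriv (e j) u) p| := by
      simp only [← abs_mul]
      exact (Finset.abs_sum_le_sum_abs _ _).trans
        (Finset.sum_le_sum fun i _ => Finset.abs_sum_le_sum_abs _ _)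
    _ ≤ ∑ i, ∑ j, ‖c‖ * ‖c‖ * (1 + (t * dirDeriv (e i) (dirDeriv (e j) u) p) ^ 2) := by
      gcongr with i _ j
      exacts [norm_le_pi_norm c i, norm_le_pi_norm c j, abs_le_one_add_sq _]
    _ = ‖c‖ ^ 2 * (Fintype.card ι ^ 2 + t ^ 2 * hessSq e u p) := by
      simp only [mul_pow, hessSq, ← Finset.mul_sum, Finset.sum_add_distrib]
      simp [pow_two]

end Pointwise

section Average

variable {E : Type*} [NormedAddCommGroup E] [NormedSpace ℝ E] {ι : Type*} [Fintype ι]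
  {b : Module.Basis ι ℝ E} {Ω S : Set E} {u : E → ℝ} {x : E} {d : ℝ}

lemma exists_norm_equivFun_sub_le (b : Module.Basis ι ℝ E) (hΩ : Bornology.IsBounded Ω) :
    ∃ d, ∀ x ∈ Ω, ∀ y ∈ Ω, ‖b.equivFun (y - x)‖ ≤ d := by
  obtain ⟨d, hd⟩ := Metric.isBounded_iff.1 hΩ
  refine ⟨‖(b.equivFunL : E →L[ℝ] ι → ℝ)‖ * d, fun x hx y hy => ?_⟩
  exact (b.equivFunL : E →L[ℝ] ι → ℝ).le_opNorm_of_le (dist_eq_norm y x ▸ hd hy hx)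

variable [MeasurableSpace E] [BorelSpace E] {μ : Measure E}

lemma abs_setIntegral_sub_dirDeriv_le [IsFiniteMeasureOnCompacts μ] (hu : IsTestFunction u)
    (hS : IsCompact S) (hSΩ : S ⊆ Ω) (hd : ∀ y ∈ S, ‖b.equivFun (y - x)‖ ≤ d) (hd_nonneg : 0 ≤ d) :
    |∫ y in S, (u y - dirDeriv (y - x) u y) ∂μ| ≤
      (1 + d) * ((1 + Fintype.card ι) * μ.real S + ∫ p in Ω, h2Sq b u p ∂μ) := by
  have hh2 : Integrable (h2Sq b u) (μ.restrict S) := hu.h2Sq.integrable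
  have hconst : Integrable (fun _ : E => (1 + Fintype.card ι : ℝ)) (μ.restrict S) :=
    integrableOn_const hS.measure_lt_top.ne
  have hbound : ∀ᵐ y ∂μ.restrict S, ‖u y - dirDeriv (y - x) u y‖ ≤
      (1 + d) * ((1 + Fintype.card ι) + h2Sq b u y) := by
    filter_upwards [ae_restrict_mem hS.measurableSet] with y hy
    have hdir : |dirDeriv (y - x) u y| ≤ d * (Fintype.card ι + gradInner b u u y) := by
      rw [← b.sum_equivFun (y - x)]
      refine (abs_dirDeriv_sum_smul_le _ y).trans ?_
      have := gradInner_self_nonneg (e := b) (u := u) (p := y)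
      gcongr
      exact hd y hy
    calc ‖u y - dirDeriv (y - x) u y‖
      _ ≤ |u y| + |dirDeriv (y - x) u y| := abs_sub _ _
      _ ≤ (1 + u y ^ 2) + d * (Fintype.card ι + gradInner b u u y) :=
        add_le_add (abs_le_one_add_sq _) hdir
      _ ≤ (1 + d) * ((1 + Fintype.card ι) + h2Sq b u y) := by
        rw [h2Sq]
        have hg := gradInner_self_nonneg (e := b) (u := u) (p := y)
        have hh := hessSq_nonneg (e := b) (u := u) (p := y)
        nlinarith [(Fintype.card ι).cast_nonneg (α := ℝ),
          mul_nonneg hd_nonneg hh, mul_nonneg hd_nonneg (sq_nonneg (u y))]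
  calc |∫ y in S, (u y - dirDeriv (y - x) u y) ∂μ|
    _ ≤ ∫ y in S, (1 + d) * ((1 + Fintype.card ι) + h2Sq b u y) ∂μ :=
      norm_integral_le_of_norm_le ((hconst.add hh2).const_mul _) hbound
    _ = (1 + d) * ((1 + Fintype.card ι) * μ.real S + ∫ y in S, h2Sq b u y ∂μ) := by
      rw [integral_const_mul, integral_add hconst hh2]
      simp [mul_comm]
    _ ≤ _ := by
      gcongr
      exacts [.of_forall fun p => h2Sq_nonneg, hu.h2Sq.integrable.integrableOn]

-- Average Taylor's formula over the points `y ∈ S`.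
lemma measureReal_mul_eq_setIntegral_add_integral [IsFiniteMeasureOnCompacts μ]
    (hu : ContDiff ℝ ∞ u) (hS : IsCompact S) (x : E) :
    μ.real S * u x = (∫ y in S, (u y - dirDeriv (y - x) u y) ∂μ) +
      ∫ t in (0 : ℝ)..1,
        ∫ y in S, t * dirDeriv (y - x) (dirDeriv (y - x) u) (x + t • (y - x)) ∂μ := by
  set T : E → ℝ := fun y => u y - dirDeriv (y - x) u y
  set F : ℝ → E → ℝ := fun t y => t * dirDeriv (y - x) (dirDeriv (y - x) u) (x + t • (y - x))
  have hdu : ContDiff ℝ ∞ (fderiv ℝ u) := hu.fderiv_right (by simp)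
  have hT : Continuous T := by
    have := hu.continuous
    have := hdu.continuous
    unfold T dirDeriv
    fun_prop
  have hF : Continuous F.uncurry := by
    have := hdu.continuous_fderiv (by simp)
    simp only [F, Function.uncurry_def, dirDeriv_dirDeriv_eq_fderiv_fderiv hu.contDiffAt]
    fun_prop
  have : IsFiniteMeasure (μ.restrict S) := ⟨by simpa using hS.measure_lt_top⟩
  have hT_int : IntegrableOn T S μ := hT.continuousOn.integrableOn_compact hS
  have hF_int : Integrable F.uncurry ((volume.restrict (Icc 0 1)).prod (μ.restrict S)) := by
    rw [← Measure.restrict_restrict_of_subset (Subset.refl S), Measure.prod_restrict]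
    exact hF.continuousOn.integrableOn_compact (isCompact_Icc.prod hS)
  calc μ.real S * u x
    _ = ∫ y in S, (T y + ∫ t in Icc (0 : ℝ) 1, F t y) ∂μ := by
      simp_rw [integral_Icc_eq_integral_Ioc, ← intervalIntegral.integral_of_le zero_le_one, T, F,
        ← eq_sub_dirDeriv_add_integral hu x]
      simp
    _ = (∫ y in S, T y ∂μ) + ∫ t in Icc (0 : ℝ) 1, ∫ y in S, F t y ∂μ := by
      rw [integral_integral_swap hF_int]
      exact integral_add hT_int hF_int.integral_prod_right
    _ = _ := by rw [integral_Icc_eq_integral_Ioc, intervalIntegral.integral_of_le zero_le_one]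

variable [μ.IsAddHaarMeasure]

lemma abs_setIntegral_mul_dirDeriv_dirDeriv_le (hdim : Module.finrank ℝ E ≤ 2)
    (hΩ : IsOpen Ω) (hcvx : Convex ℝ Ω) (hu : IsTestFunction u) (hS : IsCompact S) (hSΩ : S ⊆ Ω)
    (hx : x ∈ Ω) (hd : ∀ y ∈ S, ‖b.equivFun (y - x)‖ ≤ d) {t : ℝ}
    (ht : t ∈ Ioc 0 1) :
    |∫ y in S, t * dirDeriv (y - x) (dirDeriv (y - x) u) (x + t • (y - x)) ∂μ| ≤
      d ^ 2 * (Fintype.card ι ^ 2 * μ.real S + ∫ p in Ω, h2Sq b u p ∂μ) := by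
  have : FiniteDimensional ℝ E := .of_basis b
  have hseg (y) : x + t • (y - x) = (1 - t) • x + t • y := by module
  have hmap : MapsTo (fun y => (1 - t) • x + t • y) S Ω := fun y hy =>
    hcvx hx (hSΩ hy) (sub_nonneg.2 ht.2) ht.1.le (sub_add_cancel 1 t)
  obtain ⟨hint, hle⟩ := setIntegral_comp_add_smul_le (μ := μ) hS.measurableSet hΩ.measurableSet
    ht.1 hmap hu.h2Sq.integrable.integrableOn fun p => h2Sq_nonneg (e := b)
  have hconst : Integrable (fun _ : E => (Fintype.card ι ^ 2 : ℝ)) (μ.restrict S) :=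
    integrableOn_const hS.measure_lt_top.ne
  have hbound : ∀ᵐ y ∂μ.restrict S,
      ‖t * dirDeriv (y - x) (dirDeriv (y - x) u) (x + t • (y - x))‖ ≤
        d ^ 2 * (Fintype.card ι ^ 2 + t ^ 2 * h2Sq b u ((1 - t) • x + t • y)) := by
    filter_upwards [ae_restrict_mem hS.measurableSet] with y hy
    rw [hseg y, ← b.sum_equivFun (y - x)]
    refine (abs_mul_dirDeriv_dirDeriv_sum_smul_le hu.contDiff _ t _).trans ?_
    have := hessSq_nonneg (e := b) (u := u) (p := (1 - t) • x + t • y)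
    gcongr
    exacts [hd y hy, hessSq_le_h2Sq]
  have hscale : t ^ 2 * (t ^ Module.finrank ℝ E)⁻¹ ≤ 1 := by
    rw [← div_eq_mul_inv]
    exact div_le_one_of_le₀ (pow_le_pow_of_le_one ht.1.le ht.2 hdim) (pow_nonneg ht.1.le _)
  calc |∫ y in S, t * dirDeriv (y - x) (dirDeriv (y - x) u) (x + t • (y - x)) ∂μ|
    _ ≤ ∫ y in S, d ^ 2 * (Fintype.card ι ^ 2 + t ^ 2 * h2Sq b u ((1 - t) • x + t • y)) ∂μ :=
      norm_integral_le_of_norm_le ((hconst.add (hint.const_mul _)).const_mul _) hbound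
    _ = d ^ 2 * (Fintype.card ι ^ 2 * μ.real S +
          t ^ 2 * ∫ y in S, h2Sq b u ((1 - t) • x + t • y) ∂μ) := by
      rw [integral_const_mul, integral_add hconst (hint.const_mul _), integral_const_mul]
      simp [mul_comm]
    _ ≤ d ^ 2 * (Fintype.card ι ^ 2 * μ.real S +
          t ^ 2 * ((t ^ Module.finrank ℝ E)⁻¹ * ∫ p in Ω, h2Sq b u p ∂μ)) := by gcongr
    _ ≤ d ^ 2 * (Fintype.card ι ^ 2 * μ.real S + ∫ p in Ω, h2Sq b u p ∂μ) := by
      rw [← mul_assoc (t ^ 2)]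
      gcongr
      exact mul_le_of_le_one_left (integral_nonneg fun p => h2Sq_nonneg) hscale

theorem exists_forall_abs_le_mul_setIntegral_h2Sq (b : Module.Basis ι ℝ E)
    (hdim : Module.finrank ℝ E ≤ 2) (hΩ : IsOpen Ω) (hcvx : Convex ℝ Ω)
    (hbdd : Bornology.IsBounded Ω) :
    ∃ C, ∀ u, IsTestFunction u → ∀ x ∈ Ω, |u x| ≤ C * (1 + ∫ p in Ω, h2Sq b u p ∂μ) := by
  obtain rfl | ⟨p₀, hp₀⟩ := Ω.eq_empty_or_nonempty
  · simp
  have : FiniteDimensional ℝ E := .of_basis b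
  obtain ⟨r, hr, hSΩ⟩ := Metric.nhds_basis_closedBall.mem_iff.1 (hΩ.mem_nhds hp₀)
  obtain ⟨d, hd⟩ := exists_norm_equivFun_sub_le b hbdd
  set S := Metric.closedBall p₀ r
  have hS : IsCompact S := isCompact_closedBall p₀ r
  set m := μ.real S
  have hm : 0 < m :=
    ENNReal.toReal_pos (Metric.measure_closedBall_pos μ p₀ hr).ne' hS.measure_lt_top.ne
  set κ := (Fintype.card ι : ℝ)
  refine ⟨((1 + d) * ((1 + κ) * m + 1) + d ^ 2 * (κ ^ 2 * m + 1)) / m, fun u hu x hx => ?_⟩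
  have hdS (y) (hy : y ∈ S) : ‖b.equivFun (y - x)‖ ≤ d := hd x hx y (hSΩ hy)
  have hd_nonneg : 0 ≤ d := (norm_nonneg _).trans (hd x hx x hx)
  set I := ∫ p in Ω, h2Sq b u p ∂μ
  have hI : 0 ≤ I := integral_nonneg fun p => h2Sq_nonneg
  have hremainder {t : ℝ} (ht : t ∈ uIoc 0 1) :
      ‖∫ y in S, t * dirDeriv (y - x) (dirDeriv (y - x) u) (x + t • (y - x)) ∂μ‖ ≤
        d ^ 2 * (κ ^ 2 * m + I) :=
    abs_setIntegral_mul_dirDeriv_dirDeriv_le hdim hΩ hcvx hu hS hSΩ hx hdS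
      (uIoc_of_le (zero_le_one (α := ℝ)) ▸ ht)
  rw [div_mul_eq_mul_div, le_div_iff₀ hm]
  calc |u x| * m
    _ = |m * u x| := by rw [abs_mul, abs_of_pos hm, mul_comm]
    _ ≤ (1 + d) * ((1 + κ) * m + I) + d ^ 2 * (κ ^ 2 * m + I) := by
      rw [measureReal_mul_eq_setIntegral_add_integral hu.contDiff hS x]
      refine (abs_add_le _ _).trans (add_le_add ?_ ?_)
      · exact abs_setIntegral_sub_dirDeriv_le hu hS hSΩ hdS hd_nonneg
      · simpa using intervalIntegral.norm_integral_le_of_norm_le_const fun t => hremainder (t := t)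
    _ ≤ ((1 + d) * ((1 + κ) * m + 1) + d ^ 2 * (κ ^ 2 * m + 1)) * (1 + I) := by
      have : 0 ≤ ((1 + d) * (1 + κ) * m + d ^ 2 * (κ ^ 2 * m)) * I + (1 + d + d ^ 2) := by
        positivity
      linarith

end Average

lemma abs_le_of_forall_exists_setIntegral_sq_sub_le {α : Type*} [TopologicalSpace α]
    [MeasurableSpace α] [OpensMeasurableSpace α] {μ : Measure α} [μ.IsOpenPosMeasure] {Ω : Set α}
    {φ : α → ℝ} {C : ℝ} (hφ : MemLp φ 2 (μ.restrict Ω)) (hφ_cont : ContinuousOn φ Ω)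
    (hΩ : IsOpen Ω)
    (happrox : ∀ ε > 0, ∃ u, MemLp u 2 (μ.restrict Ω) ∧ (∀ p ∈ Ω, |u p| ≤ C) ∧
      ∫ p in Ω, (φ p - u p) ^ 2 ∂μ ≤ ε) {x : α} (hx : x ∈ Ω) : |φ x| ≤ C := by
  set excess : α → ℝ := fun p => max (|φ p| - C) 0
  have hexcess_cont : ContinuousOn excess Ω :=
    (hφ_cont.abs.sub continuousOn_const).sup continuousOn_const
  have hexcess_le {u : α → ℝ} (hu : ∀ p ∈ Ω, |u p| ≤ C) :
      ∀ᵐ p ∂μ.restrict Ω, excess p ^ 2 ≤ (φ p - u p) ^ 2 := by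
    filter_upwards [ae_restrict_mem hΩ.measurableSet] with p hp
    rw [← sq_abs (φ p - u p)]
    refine pow_le_pow_left₀ (le_max_right _ _) (max_le ?_ (abs_nonneg _)) 2
    linarith [hu p hp, abs_sub_abs_le_abs_sub (φ p) (u p)]
  have hint : Integrable (fun p => excess p ^ 2) (μ.restrict Ω) := by
    obtain ⟨u, hu, hu_le, -⟩ := happrox 1 one_pos
    refine (hφ.sub hu).integrable_sq.mono'
      ((hexcess_cont.pow 2).aestronglyMeasurable hΩ.measurableSet) ?_
    simpa using hexcess_le hu_le
  have hzero : ∫ p in Ω, excess p ^ 2 ∂μ = 0 := by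
    refine le_antisymm (le_of_forall_pos_le_add fun ε hε => ?_)
      (integral_nonneg fun p => sq_nonneg _)
    obtain ⟨u, hu, hu_le, hφu⟩ := happrox ε hε
    rw [zero_add]
    exact (integral_mono_ae hint (hφ.sub hu).integrable_sq (hexcess_le hu_le)).trans hφu
  have hexcess_zero : EqOn (fun p => excess p ^ 2) 0 Ω :=
    Measure.eqOn_open_of_ae_eq
      ((integral_eq_zero_iff_of_nonneg (fun p => sq_nonneg _) hint).1 hzero) hΩ
      (hexcess_cont.pow 2) continuousOn_const
  have : excess x = 0 := pow_eq_zero_iff two_ne_zero |>.1 (hexcess_zero hx)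
  linarith [le_max_left (|φ x| - C) 0]

theorem IsBoundedH2Limit.exists_forall_abs_le {E : Type*} [NormedAddCommGroup E] [NormedSpace ℝ E]
    [MeasurableSpace E] [BorelSpace E] {μ : Measure E} [μ.IsAddHaarMeasure] {ι : Type*} [Fintype ι]
    {b : Module.Basis ι ℝ E} {Ω : Set E} {φ : E → ℝ} {M : ℝ} (hφ : IsBoundedH2Limit b μ Ω M φ)
    (hφ_mem : MemLp φ 2 (μ.restrict Ω)) (hφ_cont : ContinuousOn φ Ω)
    (hdim : Module.finrank ℝ E ≤ 2) (hΩ : IsOpen Ω) (hcvx : Convex ℝ Ω)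
    (hbdd : Bornology.IsBounded Ω) : ∃ C, ∀ x ∈ Ω, |φ x| ≤ C := by
  obtain ⟨C, hC⟩ := exists_forall_abs_le_mul_setIntegral_h2Sq (μ := μ) b hdim hΩ hcvx hbdd
  refine ⟨|C| * (1 + M), fun x hx =>
    abs_le_of_forall_exists_setIntegral_sq_sub_le hφ_mem hφ_cont hΩ (fun ε hε => ?_) hx⟩
  obtain ⟨u, hu, hφu, hu_le⟩ := hφ ε hε
  refine ⟨u, hu.memLp_two, fun p hp => (hC u hu p hp).trans ?_, hφu⟩
  have : 0 ≤ ∫ p in Ω, h2Sq b u p ∂μ := integral_nonneg fun p => h2Sq_nonneg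
  gcongr
  exact le_abs_self C

end SobolevEmbedding

/-! ### Regularity for the Neumann problem -/

section NeumannRegularity

variable {E : Type*} [NormedAddCommGroup E] [NormedSpace ℝ E] [MeasurableSpace E] [BorelSpace E]
  {μ : Measure E} {ι : Type*} [Fintype ι] {Ω : Set E} {φ : E → ℝ}

lemma memH1_restrict_of_integrableOn [FiniteDimensional ℝ E] {e : ι → E} (hΩ : IsOpen Ω)
    (hφ : ContDiffOn ℝ ∞ φ Ω) (hφ_int : IntegrableOn (fun p => φ p ^ 2) Ω μ)
    (hgrad_int : IntegrableOn (gradInner e φ φ) Ω μ) : MemH1 e φ (μ.restrict Ω) := by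
  have hmeas {f : E → ℝ} (hf : ContDiffOn ℝ ∞ f Ω) : AEStronglyMeasurable f (μ.restrict Ω) :=
    hf.continuousOn.aestronglyMeasurable hΩ.measurableSet
  refine ⟨(memLp_two_iff_integrable_sq (hmeas hφ)).2 hφ_int, fun i => ?_⟩
  have hi := hmeas (contDiffOn_dirDeriv (v := e i) hΩ hφ)
  refine (memLp_two_iff_integrable_sq hi).2 (hgrad_int.mono' (hi.pow 2) (.of_forall fun p => ?_))
  rw [Real.norm_of_nonneg (sq_nonneg _), pow_two]
  exact Finset.single_le_sum (f := fun j => dirDeriv (e j) φ p * dirDeriv (e j) φ p)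
    (fun j _ => mul_self_nonneg _) (Finset.mem_univ i)

lemma isWeakNeumannSolution_of_mul_setIntegral_gradInner_eq [IsFiniteMeasureOnCompacts μ]
    {e : ι → E} {h : ℝ} (hh : h ≠ 0) (hφ : MemH1 e φ (μ.restrict Ω))
    (hweak : ∀ v, IsTestFunction v →
      h ^ 2 * ∫ p in Ω, gradInner e φ v p ∂μ = ∫ p in Ω, φ p * v p ∂μ) :
    IsWeakNeumannSolution e μ Ω (fun p => ((h ^ 2)⁻¹ + 1) * φ p) φ := by
  intro v hv
  have hgrad_int : Integrable (gradInner e φ v) (μ.restrict Ω) :=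
    integrable_finsetSum _ fun i _ =>
      (hφ.memLp_dirDeriv i).integrable_mul (hv.dirDeriv (e i)).memLp_two
  calc ∫ p in Ω, h1Inner e φ v p ∂μ
    _ = (∫ p in Ω, gradInner e φ v p ∂μ) + ∫ p in Ω, φ p * v p ∂μ :=
      integral_add hgrad_int (hφ.memLp.integrable_mul hv.memLp_two)
    _ = ((h ^ 2)⁻¹ + 1) * ∫ p in Ω, φ p * v p ∂μ := by
      rw [add_one_mul, ← hweak v hv, inv_mul_cancel_left₀ (pow_ne_zero 2 hh)]
    _ = ∫ p in Ω, ((h ^ 2)⁻¹ + 1) * φ p * v p ∂μ := by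
      simp only [mul_assoc, integral_const_mul]

theorem neumann_apriori_regularity_general [μ.IsAddHaarMeasure] (b : Module.Basis ι ℝ E) {g : E → ℝ}
    (hΩ : IsOpen Ω) (hcvx : Convex ℝ Ω) (hbdd : Bornology.IsBounded Ω)
    (hφ_smooth : ContDiffOn ℝ ∞ φ Ω) (hφ_mem : MemH1 b φ (μ.restrict Ω))
    (hg : MemLp g 2 (μ.restrict Ω)) (hφ : IsWeakNeumannSolution b μ Ω g φ) :
    (∀ i j, IntegrableOn (fun p => dirDeriv (b i) (dirDeriv (b j) φ) p ^ 2) Ω μ) ∧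
      (Module.finrank ℝ E ≤ 2 → ∃ C, ∀ p ∈ Ω, |φ p| ≤ C) := by
  have : FiniteDimensional ℝ E := .of_basis b
  have hlim := hφ.isBoundedH2Limit hφ_mem hφ_smooth hg hΩ hcvx hbdd
  exact ⟨hlim.integrableOn_sq_dirDeriv_dirDeriv hφ_mem.memLp hφ_smooth hΩ, fun hdim =>
    hlim.exists_forall_abs_le hφ_mem.memLp hφ_smooth.continuousOn hdim hΩ hcvx hbdd⟩

end NeumannRegularity

section Plane

variable (u v : ℝ × ℝ → ℝ)

lemma dirDeriv_finTwoProd_zero : dirDeriv (Module.Basis.finTwoProd ℝ 0) u = pdx u := by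
  rw [Module.Basis.finTwoProd_zero]
  rfl

lemma dirDeriv_finTwoProd_one : dirDeriv (Module.Basis.finTwoProd ℝ 1) u = pdy u := by
  rw [Module.Basis.finTwoProd_one]
  rfl

lemma gradInner_finTwoProd (p : ℝ × ℝ) :
    gradInner (Module.Basis.finTwoProd ℝ) u v p = pdx u p * pdx v p + pdy u p * pdy v p := by
  rw [gradInner, Fin.sum_univ_two]
  simp only [dirDeriv_finTwoProd_zero, dirDeriv_finTwoProd_one]

lemma gradInner_finTwoProd_self : gradInner (Module.Basis.finTwoProd ℝ) u u = gradSq u :=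
  funext fun p => by rw [gradInner_finTwoProd, gradSq, pow_two, pow_two]

end Plane

/-- A priori regularity (Grisvard + Sobolev embedding): a weak semiclassical Neumann
eigenfunction on a piecewise-smooth bounded convex planar domain is in `H²(Ω)` and is
bounded on `Ω` (with an `h`-dependent constant). -/
theorem neumann_apriori_regularity
    (D : PSConvexDomain) (h : ℝ) (hh : 0 < h) (φ : ℝ × ℝ → ℝ)
    (hsm : ContDiffOn ℝ (⊤ : ℕ∞) φ D.Ω)
    (hL2 : IntegrableOn (fun p => (φ p) ^ 2) D.Ω)
    (hgrad : IntegrableOn (gradSq φ) D.Ω)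
    (heig : ∀ p ∈ D.Ω, -(h ^ 2) * lap φ p = φ p)
    (hweak : ∀ v : ℝ × ℝ → ℝ, ContDiff ℝ (⊤ : ℕ∞) v → (∃ M : ℝ, ∀ p, |v p| ≤ M) →
      (∃ M : ℝ, ∀ p, ‖fderiv ℝ v p‖ ≤ M) →
      h ^ 2 * ∫ p in D.Ω, (pdx φ p * pdx v p + pdy φ p * pdy v p) =
        ∫ p in D.Ω, φ p * v p) :
    (IntegrableOn (fun p => (pdx (pdx φ) p) ^ 2) D.Ω ∧
      IntegrableOn (fun p => (pdx (pdy φ) p) ^ 2) D.Ω ∧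
      IntegrableOn (fun p => (pdy (pdx φ) p) ^ 2) D.Ω ∧
      IntegrableOn (fun p => (pdy (pdy φ) p) ^ 2) D.Ω) ∧
    ∃ C : ℝ, ∀ p ∈ D.Ω, |φ p| ≤ C := by
  have hφ : MemH1 (Module.Basis.finTwoProd ℝ) φ (volume.restrict D.Ω) :=
    memH1_restrict_of_integrableOn D.isOpen hsm hL2 (gradInner_finTwoProd_self φ ▸ hgrad)
  have hneumann := isWeakNeumannSolution_of_mul_setIntegral_gradInner_eq hh.ne' hφ fun v hv => by
    simpa only [gradInner_finTwoProd] using hweak v hv.contDiff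
      (hv.hasCompactSupport.exists_bound_of_continuous hv.continuous)
      ((hv.hasCompactSupport.fderiv (𝕜 := ℝ)).exists_bound_of_continuous
        (hv.contDiff.continuous_fderiv (by simp)))
  obtain ⟨hH2, hbound⟩ := neumann_apriori_regularity_general _ D.isOpen D.convex D.bounded hsm hφ
    (hφ.memLp.const_mul _) hneumann
  simp only [Fin.forall_fin_two, dirDeriv_finTwoProd_zero, dirDeriv_finTwoProd_one] at hH2
  exact ⟨⟨hH2.1.1, hH2.1.2, hH2.2⟩, hbound (by simp)⟩
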